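/- Let Ω ⊂ ℝⁿ be an open, connected set of class C². Fix a unit vector γ ∈ ℝⁿ; for λ ∈ ℝ set T_λ = {x : γ·x = λ}, H_λ = {x : γ·x > λ}, Σ(λ) = H_λ ∩ Ω, let x^λ denote the reflection of x in T_λ, let λ₀ = sup{γ·x : x ∈ cl Ω}, and let λ_c be the first value of λ (decreasing from λ₀) at which either the reflected cap Σ'(λ) becomes internally tangent to ∂Ω at a point off T_λ or T_λ becomes orthogonal to ∂Ω at some point. Let u ∈ C²(cl Ω), u > 0 in Ω, solve −Δu = f(u) in Ω, u = 0 on ∂Ω, with f = f₁ + f₂ where f₁ is locally Lipschitz on ℝ and f₂ is non-decreasing. Then ∇u(x)·γ < 0 and u(x) < u(x^λ) for every x ∈ Σ(λ) and every λ ∈ (λ₀, λ_c); in particular ∇u·γ < 0 in Σ(λ_c). Moreover, if ∇u·γ = 0 at some point of Ω ∩ T_{λ_c}, then u and Ω are symmetric with respect to the hyperplane T_{λ_c}. -/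

import Mathlib

/-!
The proof is the method of moving planes. Write `w_l(x) = u(x^l) - u(x)` (`wfun`) on the cap
`Σ(l)`. Every reflected cap with `l ≥ λ_c` lies in `Ω` (`cap_reflect`), and where `w_l ≥ 0` the
monotonicity of `f₂` and the Lipschitz bound on `f₁` give `Δ w_l ≤ L w_l` (`Setup.w_lap`). For
nonnegative supersolutions of this kind the strong maximum principle (`strong_max`), Hopf's lemma
(`hopf`) and Serrin's corner estimate (`barrier_bound`) all come from explicit exponential barriers.

Consider the positions `l > λ_c` with `w_l > 0` in `Σ(l)`; all `l ≥ λ₀` are trivially among them.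
This set is closed: in the limit `w_l ≥ 0`, and a zero would propagate along `γ` up to the boundary,
where `u(x^l) > 0 = u(x)` (`Setup.strict`). It is also open (`Setup.open_step`), by compactness of
`cl Ω` and a local argument at each point of the closed cap.
On `T_l` it suffices that `∂_γ u < 0` nearby. Inside `Ω` this is Hopf's lemma for `w_l`
(`Setup.neg_on_plane`). At the boundary either `∂_γ u < 0`, or `∂_ν ∂_γ u > 0` for the outer normal
`ν` (`Setup.bdry_transversal`, and `Setup.bdry_orthogonal` when `γ` is tangent to the boundary); in
the second case `∂_γ u` increases along `ν` to its non-positive boundary values. Off `T_l`, the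
only delicate points are boundary points reflected to boundary points; there `γ` is tangent to `∂Ω`
and Hopf's lemma separates the normal derivatives of `u` at the two points
(`Setup.open_near_tangency`). Hence every `l > λ_c` is good (`Setup.all_caps`), and Hopf's lemma on
`T_l` gives `∂_γ u < 0` (`Setup.cap_neg`).

At `λ_c` one still has `w ≥ 0`. If `∂_γ u = 0` at a point of `Ω ∩ T_{λ_c}`, Hopf's lemma yields a
zero of `w` in the cap near that point. The set where the reflection locally preserves `Ω` and `u`
(`symmSet`) is then open, nonempty and relatively closed in `Ω`, hence all of `Ω`.
-/

open Metric Set MeasureTheory Filter Bornology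
open scoped RealInnerProductSpace Topology

noncomputable section

/-- The Laplacian of `u : ℝⁿ → ℝ`, as the sum of the pure second partial derivatives. -/
def lap {n : ℕ} (u : EuclideanSpace ℝ (Fin n) → ℝ) (x : EuclideanSpace ℝ (Fin n)) : ℝ :=
  ∑ i : Fin n, iteratedFDeriv ℝ 2 u x ![EuclideanSpace.single i 1, EuclideanSpace.single i 1]

/-- `Ω` is a domain of class `C²`. -/
def IsC2Domain {n : ℕ} (Ω : Set (EuclideanSpace ℝ (Fin n))) : Prop :=
  ∀ x ∈ frontier Ω, ∃ (U : Set (EuclideanSpace ℝ (Fin n))) (φ : EuclideanSpace ℝ (Fin n) → ℝ),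
    IsOpen U ∧ x ∈ U ∧ ContDiffOn ℝ 2 φ U ∧ (∀ y ∈ U, gradient φ y ≠ 0) ∧
    Ω ∩ U = {y ∈ U | φ y < 0} ∧ frontier Ω ∩ U = {y ∈ U | φ y = 0}

/-- The open cap `Σ(λ) = {x ∈ Ω | γ·x > λ}` cut off from `Ω` by the hyperplane
`T_λ = {γ·x = λ}`. -/
def planeCap {n : ℕ} (Ω : Set (EuclideanSpace ℝ (Fin n))) (γ : EuclideanSpace ℝ (Fin n))
    (l : ℝ) : Set (EuclideanSpace ℝ (Fin n)) := {x ∈ Ω | l < ⟪γ, x⟫}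

/-- The reflection `x ↦ x^λ` of `ℝⁿ` in the hyperplane `T_λ = {γ·x = λ}`. -/
def planeRefl {n : ℕ} (γ : EuclideanSpace ℝ (Fin n)) (l : ℝ) (x : EuclideanSpace ℝ (Fin n)) :
    EuclideanSpace ℝ (Fin n) := x + (2 * (l - ⟪γ, x⟫)) • γ

/-! ### Second derivatives and the Laplacian -/

theorem lap_eq_laplacian {n : ℕ} (h : EuclideanSpace ℝ (Fin n) → ℝ) :
    lap h = Laplacian.laplacian h := by
  rw [InnerProductSpace.laplacian_eq_iteratedFDeriv_orthonormalBasis h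
    (EuclideanSpace.basisFun (Fin n) ℝ)]
  ext x
  simp [lap]

theorem lap_eq_sum {n : ℕ} (h : EuclideanSpace ℝ (Fin n) → ℝ) (x : EuclideanSpace ℝ (Fin n))
    (b : OrthonormalBasis (Fin n) ℝ (EuclideanSpace ℝ (Fin n))) :
    lap h x = ∑ i, fderiv ℝ (fderiv ℝ h) x (b i) (b i) := by
  rw [lap_eq_laplacian, InnerProductSpace.laplacian_eq_iteratedFDeriv_orthonormalBasis h b]
  simp [iteratedFDeriv_two_apply]

theorem lap_sub {n : ℕ} {w z : EuclideanSpace ℝ (Fin n) → ℝ} {x : EuclideanSpace ℝ (Fin n)}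
    (hw : ContDiffAt ℝ 2 w x) (hz : ContDiffAt ℝ 2 z x) :
    lap (fun y => w y - z y) x = lap w x - lap z x := by
  simp only [lap_eq_laplacian]
  exact hw.laplacian_sub hz

theorem lap_const_mul {n : ℕ} {z : EuclideanSpace ℝ (Fin n) → ℝ} {x : EuclideanSpace ℝ (Fin n)}
    (c : ℝ) (hz : ContDiffAt ℝ 2 z x) :
    lap (fun y => c * z y) x = c * lap z x := by
  simp only [lap_eq_laplacian]
  exact InnerProductSpace.laplacian_smul c hz

section Line

variable {E : Type*} [NormedAddCommGroup E] [NormedSpace ℝ E]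

theorem hasDerivAt_apply_const {F : ℝ → E →L[ℝ] ℝ} {F' : E →L[ℝ] ℝ} {t : ℝ}
    (h : HasDerivAt F F' t) (e : E) : HasDerivAt (fun r => F r e) (F' e) t := by
  have := h.clm_apply (hasDerivAt_const t e)
  simpa using this

theorem contDiffAt_fderiv_differentiableAt {h : E → ℝ} {x : E} (hh : ContDiffAt ℝ 2 h x) :
    DifferentiableAt ℝ (fderiv ℝ h) x :=
  (hh.fderiv_right (m := 1) (by norm_num)).differentiableAt (by norm_num)

theorem deriv_line_eventually {h : E → ℝ} {x : E} (hh : ContDiffAt ℝ 2 h x) (e : E) :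
    deriv (fun t : ℝ => h (x + t • e)) =ᶠ[𝓝 0] fun t => fderiv ℝ h (x + t • e) e := by
  have h1 : ∀ᶠ y in 𝓝 x, DifferentiableAt ℝ h y :=
    (hh.eventually (by simp)).mono fun y hy => hy.differentiableAt (by norm_num)
  have hc : Tendsto (fun t : ℝ => x + t • e) (𝓝 0) (𝓝 x) := by
    have : Continuous fun t : ℝ => x + t • e := by fun_prop
    simpa using this.tendsto 0
  filter_upwards [hc.eventually h1] with t ht
  have hl : HasDerivAt (fun t : ℝ => x + t • e) e t := by
    simpa using ((hasDerivAt_id t).smul_const e).const_add x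
  exact (ht.hasFDerivAt.comp_hasDerivAt t hl).deriv

theorem deriv_deriv_line {h : E → ℝ} {x : E} (hh : ContDiffAt ℝ 2 h x) (e : E) :
    deriv (deriv (fun t : ℝ => h (x + t • e))) 0 = fderiv ℝ (fderiv ℝ h) x e e := by
  rw [(deriv_line_eventually hh e).deriv_eq]
  have hl : HasDerivAt (fun t : ℝ => x + t • e) e 0 := by
    simpa using ((hasDerivAt_id (0 : ℝ)).smul_const e).const_add x
  have h2 : HasFDerivAt (fderiv ℝ h) (fderiv ℝ (fderiv ℝ h) x) (x + (0 : ℝ) • e) := by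
    simpa using (contDiffAt_fderiv_differentiableAt hh).hasFDerivAt
  have h3 : HasDerivAt (fun t : ℝ => fderiv ℝ h (x + t • e)) (fderiv ℝ (fderiv ℝ h) x e) 0 :=
    h2.comp_hasDerivAt 0 hl
  have h4 : HasDerivAt (fun t : ℝ => fderiv ℝ h (x + t • e) e) (fderiv ℝ (fderiv ℝ h) x e e) 0 :=
    hasDerivAt_apply_const h3 e
  exact h4.deriv

theorem snd_deriv_nonneg_of_isLocalMin {h : E → ℝ} {x : E} (hh : ContDiffAt ℝ 2 h x)
    (hm : IsLocalMin h x) (e : E) : 0 ≤ fderiv ℝ (fderiv ℝ h) x e e := by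
  by_contra! hneg
  rw [← deriv_deriv_line hh e] at hneg
  have hc : ContinuousAt (fun t : ℝ => x + t • e) 0 := by fun_prop
  have hmin : IsLocalMin (fun t : ℝ => h (x + t • e)) 0 := by
    have h0 : Tendsto (fun t : ℝ => x + t • e) (𝓝 0) (𝓝 x) := by simpa using hc.tendsto
    simpa [IsLocalMin, IsMinFilter] using h0.eventually hm
  have hcont : ContinuousAt (fun t : ℝ => h (x + t • e)) 0 := by
    have : ContinuousAt h (x + (0 : ℝ) • e) := by simpa using hh.continuousAt
    exact this.comp (f := fun t : ℝ => x + t • e) hc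
  have hmax := isLocalMax_of_deriv_deriv_neg hneg hmin.deriv_eq_zero hcont
  -- a local minimum that is a local maximum is locally constant, so the second derivative vanishes
  have hconst : (fun t : ℝ => h (x + t • e)) =ᶠ[𝓝 0] fun _ => h (x + (0 : ℝ) • e) := by
    filter_upwards [hmin, hmax] with t h1 h2
    exact le_antisymm h2 h1
  have h3 := hconst.deriv.deriv_eq
  simp at h3
  linarith

end Line

theorem lap_nonneg_of_isLocalMin {n : ℕ} {h : EuclideanSpace ℝ (Fin n) → ℝ}
    {x : EuclideanSpace ℝ (Fin n)} (hh : ContDiffAt ℝ 2 h x) (hm : IsLocalMin h x) :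
    0 ≤ lap h x := by
  rw [lap_eq_sum h x (EuclideanSpace.basisFun (Fin n) ℝ)]
  exact Finset.sum_nonneg fun i _ => snd_deriv_nonneg_of_isLocalMin hh hm _

/-- Weak maximum principle for `Δ - L`, `L ≥ 0`: a supersolution `w` dominating a strict
subsolution `z` off the open set `D` dominates it on the whole compact set `K`. -/
theorem comparison {n : ℕ} {K D : Set (EuclideanSpace ℝ (Fin n))} (hK : IsCompact K)
    (hD : IsOpen D) (hDK : D ⊆ K) {w z : EuclideanSpace ℝ (Fin n) → ℝ} {L : ℝ} (hL : 0 ≤ L)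
    (hw : ContinuousOn w K) (hz : ContinuousOn z K)
    (hw2 : ∀ x ∈ D, ContDiffAt ℝ 2 w x) (hz2 : ∀ x ∈ D, ContDiffAt ℝ 2 z x)
    (hlw : ∀ x ∈ D, lap w x ≤ L * w x) (hlz : ∀ x ∈ D, L * z x < lap z x)
    (hbd : ∀ x ∈ K, x ∉ D → z x ≤ w x) : ∀ x ∈ K, z x ≤ w x := by
  intro x hx
  obtain ⟨y, hyK, hy⟩ := hK.exists_isMinOn ⟨x, hx⟩ (hw.sub hz)
  have hxy : w y - z y ≤ w x - z x := hy hx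
  by_contra! hlt
  have hneg : w y - z y < 0 := by linarith
  have hyD : y ∈ D := by
    by_contra hyD
    linarith [hbd y hyK hyD]
  have hloc : IsLocalMin (fun y => w y - z y) y :=
    hy.isLocalMin (mem_of_superset (hD.mem_nhds hyD) hDK)
  have h1 := lap_nonneg_of_isLocalMin ((hw2 y hyD).sub (hz2 y hyD)) hloc
  rw [lap_sub (hw2 y hyD) (hz2 y hyD)] at h1
  have h2 := hlw y hyD
  have h3 := hlz y hyD
  have h4 : L * (w y - z y) ≤ 0 := mul_nonpos_of_nonneg_of_nonpos hL hneg.le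
  linarith

/-! ### The Hopf and Serrin barriers -/

/-- The barrier `a(x) (exp(-α|x-c|²) - b)`, with the affine weight `a(x) = ⟪g, x⟫ + s`. The weight
`a = 1` gives Hopf's barrier, the distance to a hyperplane through `c` gives Serrin's corner
barrier. -/
def barrier {n : ℕ} (g c : EuclideanSpace ℝ (Fin n)) (s α b : ℝ)
    (x : EuclideanSpace ℝ (Fin n)) : ℝ :=
  (⟪g, x⟫ + s) * (Real.exp (-α * ‖x - c‖ ^ 2) - b)

theorem contDiff_barrier {n : ℕ} (g c : EuclideanSpace ℝ (Fin n)) (s α b : ℝ) :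
    ContDiff ℝ 2 (barrier g c s α b) := by
  unfold barrier
  have h1 : ContDiff ℝ 2 fun x : EuclideanSpace ℝ (Fin n) => ‖x - c‖ ^ 2 :=
    (contDiff_id.sub contDiff_const).norm_sq ℝ
  have h2 : ContDiff ℝ 2 fun x : EuclideanSpace ℝ (Fin n) => ⟪g, x⟫ :=
    contDiff_const.inner ℝ contDiff_id
  exact (h2.add contDiff_const).mul ((Real.contDiff_exp.comp (contDiff_const.mul h1)).sub
    contDiff_const)

theorem barrier_snd_deriv {n : ℕ} (g c : EuclideanSpace ℝ (Fin n)) (s α b : ℝ)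
    (x e : EuclideanSpace ℝ (Fin n)) (he : ‖e‖ = 1) :
    fderiv ℝ (fderiv ℝ (barrier g c s α b)) x e e =
      Real.exp (-α * ‖x - c‖ ^ 2) * ((⟪g, x⟫ + s) * (4 * α ^ 2 * ⟪x - c, e⟫ ^ 2 - 2 * α)
        - 4 * α * (⟪g, e⟫ * ⟪x - c, e⟫)) := by
  rw [← deriv_deriv_line (contDiff_barrier g c s α b).contDiffAt e]
  set A := ⟪g, x⟫ + s
  set q := ⟪g, e⟫
  set d := ⟪x - c, e⟫
  set r := ‖x - c‖ ^ 2
  have hf : (fun t : ℝ => barrier g c s α b (x + t • e)) =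
      fun t : ℝ => (A + t * q) * (Real.exp (-α * (r + 2 * t * d + t ^ 2)) - b) := by
    ext t
    have h1 : ‖x + t • e - c‖ ^ 2 = r + 2 * t * d + t ^ 2 := by
      rw [show x + t • e - c = (x - c) + t • e by abel, norm_add_sq_real, norm_smul, he,
        inner_smul_right]
      simp only [r, d, mul_one, Real.norm_eq_abs, sq_abs]
      ring
    simp only [barrier, h1, inner_add_right, inner_smul_right, A, q]
    ring
  have hp : ∀ t : ℝ, HasDerivAt (fun t : ℝ => Real.exp (-α * (r + 2 * t * d + t ^ 2)))
      (Real.exp (-α * (r + 2 * t * d + t ^ 2)) * (-α * (2 * d + 2 * t))) t := by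
    intro t
    have h0 : HasDerivAt (fun t : ℝ => -α * (r + 2 * t * d + t ^ 2)) (-α * (2 * d + 2 * t)) t := by
      have h1 : HasDerivAt (fun t : ℝ => r + 2 * t * d) (2 * d) t := by
        simpa using (((hasDerivAt_id t).const_mul 2).mul_const d).const_add r
      have h2 : HasDerivAt (fun t : ℝ => t ^ 2) (2 * t) t := by simpa using hasDerivAt_pow 2 t
      exact (h1.add h2).const_mul (-α)
    exact h0.exp
  have hA : ∀ t : ℝ, HasDerivAt (fun t : ℝ => A + t * q) q t := fun t => by
    simpa using ((hasDerivAt_id t).mul_const q).const_add A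
  have hB : HasDerivAt (fun t : ℝ => -α * (2 * d + 2 * t)) (-α * 2) 0 := by
    simpa using (((hasDerivAt_id (0 : ℝ)).const_mul 2).const_add (2 * d)).const_mul (-α)
  rw [hf]
  have hd : deriv (fun t : ℝ => (A + t * q) * (Real.exp (-α * (r + 2 * t * d + t ^ 2)) - b)) =
      fun t => q * (Real.exp (-α * (r + 2 * t * d + t ^ 2)) - b) +
        (A + t * q) * (Real.exp (-α * (r + 2 * t * d + t ^ 2)) * (-α * (2 * d + 2 * t))) := by
    ext t
    exact ((hA t).mul ((hp t).sub_const b)).deriv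
  rw [hd]
  have h3 := ((((hp 0).sub_const b).const_mul q).add ((hA 0).mul ((hp 0).mul hB))).deriv
  refine Eq.trans h3 ?_
  simp
  ring

theorem lap_barrier {n : ℕ} (g c : EuclideanSpace ℝ (Fin n)) (s α b : ℝ)
    (x : EuclideanSpace ℝ (Fin n)) :
    lap (barrier g c s α b) x = Real.exp (-α * ‖x - c‖ ^ 2) *
      ((⟪g, x⟫ + s) * (4 * α ^ 2 * ‖x - c‖ ^ 2 - 2 * α * n) - 4 * α * ⟪g, x - c⟫) := by
  set B := EuclideanSpace.basisFun (Fin n) ℝ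
  rw [lap_eq_sum _ _ B]
  simp_rw [fun i => barrier_snd_deriv g c s α b x (B i) (B.orthonormal.1 i)]
  rw [← Finset.mul_sum, Finset.sum_sub_distrib, ← Finset.mul_sum, ← Finset.mul_sum,
    Finset.sum_sub_distrib, ← Finset.mul_sum]
  have h1 : ∑ i, ⟪x - c, B i⟫ ^ 2 = ‖x - c‖ ^ 2 := by
    have := B.sum_sq_norm_inner_left (x - c)
    simpa using this
  have h2 : ∑ i, ⟪g, B i⟫ * ⟪x - c, B i⟫ = ⟪g, x - c⟫ := by
    simp_rw [real_inner_comm (B _) (x - c)]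
    rw [← B.sum_inner_mul_inner g (x - c)]
  rw [h1, h2, Finset.sum_const, Finset.card_univ, Fintype.card_fin, nsmul_eq_mul]
  ring

/-- Serrin's barrier estimate. Let `Q` lie on the sphere of radius `R` about `c`. A nonnegative
`w` with `Δw ≤ L w` in the part of the ball `B(c, R)` near `Q` where the weight
`a(x) = ⟪g, x⟫ + s` is positive, and with `w ≥ ε a` at distance `R / 2` from `Q`, dominates a
multiple of `a(x) (R² - |x - c|²)` near `Q`. -/
theorem barrier_bound {n : ℕ} {g c Q : EuclideanSpace ℝ (Fin n)} {s R L ε : ℝ} (hR : 0 < R)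
    (hL : 0 ≤ L) (hε : 0 < ε) (hQ : dist Q c = R)
    {w : EuclideanSpace ℝ (Fin n) → ℝ} {K : Set (EuclideanSpace ℝ (Fin n))}
    (hKdef : K = {x | dist x c ≤ R ∧ dist x Q ≤ R / 2 ∧ 0 ≤ ⟪g, x⟫ + s})
    (hw : ContinuousOn w K) (hw0 : ∀ x ∈ K, 0 ≤ w x)
    (hw2 : ∀ x, dist x c < R → dist x Q < R / 2 → 0 < ⟪g, x⟫ + s →
      ContDiffAt ℝ 2 w x ∧ lap w x ≤ L * w x)
    (hg : ∀ x, 0 < ⟪g, x⟫ + s → ⟪g, x - c⟫ ≤ ⟪g, x⟫ + s)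
    (hws : ∀ x ∈ K, dist x Q = R / 2 → ε * (⟪g, x⟫ + s) ≤ w x) :
    ∃ κ > 0, ∀ x ∈ K, κ * ((⟪g, x⟫ + s) * (R ^ 2 - dist x c ^ 2)) ≤ w x := by
  obtain ⟨α, hα0, hα⟩ : ∃ α > 0, L < α * (α * R ^ 2 - 2 * n - 4) := by
    refine ⟨(L + 1 + 2 * n + 4) / R ^ 2 + (L + 1), by positivity, ?_⟩
    have e1 : ((L + 1 + 2 * n + 4) / R ^ 2 + (L + 1)) * R ^ 2 - 2 * n - 4
        = (L + 1) + (L + 1) * R ^ 2 := by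
      field_simp
      ring
    rw [e1]
    have p1 : 0 < (L + 1 + 2 * n + 4) / R ^ 2 := by positivity
    have hR2 : 0 < R ^ 2 := by positivity
    have e2 : (L + 1 + 2 * n + 4) / R ^ 2 * ((L + 1) * R ^ 2)
        = (L + 1 + 2 * n + 4) * (L + 1) := by
      field_simp
    have hn : (0 : ℝ) ≤ n := Nat.cast_nonneg n
    nlinarith [mul_pos p1 (by positivity : 0 < L + 1), mul_nonneg hn hL,
      mul_pos (mul_pos (by positivity : 0 < L + 1) (by positivity : 0 < L + 1)) hR2]
  set b := Real.exp (-α * R ^ 2) with hb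
  have hb0 : 0 < b := Real.exp_pos _
  set z := barrier g c s α b with hzdef
  set D : Set (EuclideanSpace ℝ (Fin n)) :=
    {x | dist x c < R ∧ dist x Q < R / 2 ∧ 0 < ⟪g, x⟫ + s} with hDdef
  have hcomp : ∀ x ∈ K, ε * z x ≤ w x := by
    refine comparison (D := D) (L := L) ?_ ?_ ?_ hL hw ?_ (fun x hx => (hw2 x hx.1 hx.2.1 hx.2.2).1)
      ?_ (fun x hx => (hw2 x hx.1 hx.2.1 hx.2.2).2) ?_ ?_
    · have : K = closedBall c R ∩ (closedBall Q (R / 2) ∩ {x | 0 ≤ ⟪g, x⟫ + s}) := by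
        rw [hKdef]; rfl
      rw [this]
      refine (isCompact_closedBall c R).inter_right (isClosed_closedBall.inter ?_)
      exact isClosed_le (by fun_prop) (by fun_prop)
    · have : D = ball c R ∩ (ball Q (R / 2) ∩ {x | 0 < ⟪g, x⟫ + s}) := rfl
      rw [this]
      exact isOpen_ball.inter (isOpen_ball.inter (isOpen_lt (by fun_prop) (by fun_prop)))
    · rw [hKdef]
      exact fun x hx => ⟨hx.1.le, hx.2.1.le, hx.2.2.le⟩
    · exact ((contDiff_barrier g c s α b).continuous.const_mul ε |>.continuousOn)
    · exact fun x _ => contDiffAt_const.mul (contDiff_barrier g c s α b).contDiffAt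
    · intro x hx
      rw [lap_const_mul ε (contDiff_barrier g c s α b).contDiffAt, lap_barrier, hzdef, barrier]
      set a := ⟪g, x⟫ + s
      have ha : 0 < a := hx.2.2
      set p := Real.exp (-α * ‖x - c‖ ^ 2)
      have hp : 0 < p := Real.exp_pos _
      have hga := hg x ha
      have hr : R / 2 ≤ ‖x - c‖ := by
        have := dist_triangle Q x c
        rw [hQ, dist_comm Q x, dist_eq_norm x c] at this
        linarith [hx.2.1]
      have hr2 : R ^ 2 ≤ 4 * ‖x - c‖ ^ 2 := by nlinarith
      have h1 : L * (a * (p - b)) ≤ p * (a * L) := by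
        have : 0 ≤ L * a * b := by positivity
        nlinarith
      have h2 : a * L < a * (4 * α ^ 2 * ‖x - c‖ ^ 2 - 2 * α * n) - 4 * α * ⟪g, x - c⟫ := by
        have h3 : α * ⟪g, x - c⟫ ≤ α * a := mul_le_mul_of_nonneg_left hga hα0.le
        have h4 : α ^ 2 * R ^ 2 ≤ α ^ 2 * (4 * ‖x - c‖ ^ 2) :=
          mul_le_mul_of_nonneg_left hr2 (by positivity)
        have h5 : L < 4 * α ^ 2 * ‖x - c‖ ^ 2 - 2 * α * n - 4 * α := by nlinarith
        have h6 := mul_lt_mul_of_pos_left h5 ha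
        nlinarith
      have h3 := mul_lt_mul_of_pos_left h2 hp
      have h4 : L * (ε * (a * (p - b))) = ε * (L * (a * (p - b))) := by ring
      rw [h4]
      exact mul_lt_mul_of_pos_left (lt_of_le_of_lt h1 h3) hε
    · intro x hx hxD
      have hx' := hx
      rw [hKdef] at hx'
      obtain ⟨k1, k2, k3⟩ := hx'
      rcases eq_or_lt_of_le k1 with h1 | h1
      · have : z x = 0 := by
          rw [hzdef, barrier, ← dist_eq_norm, h1, ← hb, sub_self, mul_zero]
        rw [this, mul_zero]
        exact hw0 x hx
      rcases eq_or_lt_of_le k3 with h3 | h3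
      · have : z x = 0 := by rw [hzdef, barrier, ← h3, zero_mul]
        rw [this, mul_zero]
        exact hw0 x hx
      rcases eq_or_lt_of_le k2 with h2 | h2
      · refine le_trans (mul_le_mul_of_nonneg_left ?_ hε.le) (hws x hx h2)
        have : Real.exp (-α * ‖x - c‖ ^ 2) ≤ 1 := by
          rw [Real.exp_le_one_iff]
          have : 0 ≤ α * ‖x - c‖ ^ 2 := by positivity
          linarith
        rw [hzdef, barrier]
        exact mul_le_of_le_one_right k3 (by linarith)
      · exact absurd ⟨h1, h2, h3⟩ hxD
  refine ⟨ε * (b * α), by positivity, fun x hx => le_trans ?_ (hcomp x hx)⟩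
  rw [mul_assoc]
  refine mul_le_mul_of_nonneg_left ?_ hε.le
  have hx' := hx
  rw [hKdef] at hx'
  obtain ⟨k1, k2, k3⟩ := hx'
  rw [hzdef, barrier]
  have h1 : b * (α * (R ^ 2 - dist x c ^ 2)) ≤ Real.exp (-α * ‖x - c‖ ^ 2) - b := by
    have h2 : Real.exp (-α * ‖x - c‖ ^ 2) = b * Real.exp (α * (R ^ 2 - dist x c ^ 2)) := by
      rw [hb, ← Real.exp_add, dist_eq_norm]
      congr 1
      ring
    rw [h2]
    nlinarith [Real.add_one_le_exp (α * (R ^ 2 - dist x c ^ 2))]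
  have := mul_le_mul_of_nonneg_left h1 k3
  nlinarith

/-- Hopf's boundary lemma at the point `Q` of the sphere of radius `R` about `c`. -/
theorem hopf {n : ℕ} {c Q : EuclideanSpace ℝ (Fin n)} {R L : ℝ} (hR : 0 < R) (hL : 0 ≤ L)
    (hQ : dist Q c = R) {w : EuclideanSpace ℝ (Fin n) → ℝ}
    (hw : ContinuousOn w (closedBall c R)) (hwQ : 0 ≤ w Q)
    (hpos : ∀ x ∈ closedBall c R, x ≠ Q → 0 < w x)
    (hw2 : ∀ x ∈ ball c R, ContDiffAt ℝ 2 w x ∧ lap w x ≤ L * w x) :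
    ∃ κ > 0, ∀ t ∈ Icc (0 : ℝ) (1 / 2), κ * t ≤ w (Q + t • (c - Q)) := by
  set K : Set (EuclideanSpace ℝ (Fin n)) :=
    {x | dist x c ≤ R ∧ dist x Q ≤ R / 2 ∧ 0 ≤ ⟪(0 : EuclideanSpace ℝ (Fin n)), x⟫ + 1} with hK
  have hKsub : K ⊆ closedBall c R := fun x hx => hx.1
  obtain ⟨ε, hε, hws⟩ : ∃ ε > 0, ∀ x ∈ closedBall c R ∩ sphere Q (R / 2), ε ≤ w x := by
    rcases (closedBall c R ∩ sphere Q (R / 2)).eq_empty_or_nonempty with h0 | h0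
    · exact ⟨1, one_pos, by simp [h0]⟩
    · have hcomp : IsCompact (closedBall c R ∩ sphere Q (R / 2)) :=
        (isCompact_closedBall c R).inter_right isClosed_sphere
      obtain ⟨y, hy, hmin⟩ := hcomp.exists_isMinOn h0 (hw.mono inter_subset_left)
      refine ⟨w y, hpos y hy.1 ?_, fun x hx => hmin hx⟩
      rintro rfl
      have := hy.2
      simp at this
      linarith
  obtain ⟨κ, hκ, h⟩ := barrier_bound (g := 0) (s := 1) (K := K) hR hL hε hQ hK (hw.mono hKsub)
    (fun x hx => by
      by_cases hxQ : x = Q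
      · rw [hxQ]; exact hwQ
      · exact (hpos x (hKsub hx) hxQ).le)
    (fun x hx _ _ => hw2 x hx) (by simp)
    (fun x hx hxs => by simpa using hws x ⟨hKsub hx, hxs⟩)
  have hcQ : ‖c - Q‖ = R := by rw [← dist_eq_norm, dist_comm, hQ]
  refine ⟨κ * R ^ 2, by positivity, fun t ht => ?_⟩
  have hd : dist (Q + t • (c - Q)) c = (1 - t) * R := by
    rw [dist_eq_norm, show Q + t • (c - Q) - c = -((1 - t) • (c - Q)) by module, norm_neg,
      norm_smul, hcQ, Real.norm_eq_abs, abs_of_nonneg (by linarith [ht.2])]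
  have hd2 : dist (Q + t • (c - Q)) Q = t * R := by
    rw [dist_eq_norm, add_sub_cancel_left, norm_smul, hcQ, Real.norm_eq_abs, abs_of_nonneg ht.1]
  have hmem : Q + t • (c - Q) ∈ K := by
    refine ⟨?_, ?_, by simp⟩
    · rw [hd]; nlinarith [ht.1, ht.2]
    · rw [hd2]; nlinarith [ht.1, ht.2]
  refine le_trans ?_ (h _ hmem)
  rw [hd, mul_assoc]
  refine mul_le_mul_of_nonneg_left ?_ hκ.le
  simp only [inner_zero_left, zero_add, one_mul]
  nlinarith [mul_nonneg (mul_nonneg ht.1 (by linarith [ht.2] : 0 ≤ 1 - t)) (sq_nonneg R)]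

/-! ### Reflections, the strong maximum principle, exit points -/

section Refl

variable {n : ℕ} {γ : EuclideanSpace ℝ (Fin n)}

theorem inner_planeRefl (hγ : ‖γ‖ = 1) (l : ℝ) (x : EuclideanSpace ℝ (Fin n)) :
    ⟪γ, planeRefl γ l x⟫ = 2 * l - ⟪γ, x⟫ := by
  simp only [planeRefl, inner_add_right, inner_smul_right, real_inner_self_eq_norm_sq, hγ]
  ring

theorem planeRefl_planeRefl (hγ : ‖γ‖ = 1) (l : ℝ) (x : EuclideanSpace ℝ (Fin n)) :
    planeRefl γ l (planeRefl γ l x) = x := by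
  rw [planeRefl, inner_planeRefl hγ, planeRefl]
  module

theorem planeRefl_of_eq {l : ℝ} {x : EuclideanSpace ℝ (Fin n)} (h : ⟪γ, x⟫ = l) :
    planeRefl γ l x = x := by
  simp [planeRefl, h]

theorem continuous_planeRefl (γ : EuclideanSpace ℝ (Fin n)) (l : ℝ) :
    Continuous (planeRefl γ l) := by
  unfold planeRefl
  fun_prop

theorem continuous_planeRefl_prod (γ : EuclideanSpace ℝ (Fin n)) :
    Continuous fun p : ℝ × EuclideanSpace ℝ (Fin n) => planeRefl γ p.1 p.2 := by
  unfold planeRefl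
  fun_prop

/-- The linear part of the reflection in the hyperplanes orthogonal to `γ`. -/
def reflLin (γ : EuclideanSpace ℝ (Fin n)) :
    EuclideanSpace ℝ (Fin n) ≃ₗᵢ[ℝ] EuclideanSpace ℝ (Fin n) :=
  (ℝ ∙ γ)ᗮ.reflection

theorem reflLin_apply (hγ : ‖γ‖ = 1) (x : EuclideanSpace ℝ (Fin n)) :
    reflLin γ x = x - (2 * ⟪γ, x⟫) • γ := by
  rw [reflLin, Submodule.reflection_orthogonal_apply, Submodule.reflection_singleton_apply, hγ]
  simp
  module

theorem planeRefl_eq (hγ : ‖γ‖ = 1) (l : ℝ) (x : EuclideanSpace ℝ (Fin n)) :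
    planeRefl γ l x = reflLin γ x + (2 * l) • γ := by
  rw [reflLin_apply hγ, planeRefl]
  module

theorem dist_planeRefl (hγ : ‖γ‖ = 1) (l : ℝ) (x y : EuclideanSpace ℝ (Fin n)) :
    dist (planeRefl γ l x) (planeRefl γ l y) = dist x y := by
  rw [planeRefl_eq hγ, planeRefl_eq hγ, dist_add_right, (reflLin γ).dist_map]

theorem hasFDerivAt_planeRefl (hγ : ‖γ‖ = 1) (l : ℝ) (x : EuclideanSpace ℝ (Fin n)) :
    HasFDerivAt (planeRefl γ l)
      ((reflLin γ).toContinuousLinearEquiv.toContinuousLinearMap) x := by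
  have : planeRefl γ l = fun x => (reflLin γ).toContinuousLinearEquiv x + (2 * l) • γ := by
    ext1 x
    exact planeRefl_eq hγ l x
  rw [this]
  exact (reflLin γ).toContinuousLinearEquiv.hasFDerivAt.add_const _

theorem contDiff_planeRefl (γ : EuclideanSpace ℝ (Fin n)) (l : ℝ) :
    ContDiff ℝ 2 (planeRefl γ l) := by
  unfold planeRefl
  have h2 : ContDiff ℝ 2 fun x : EuclideanSpace ℝ (Fin n) => ⟪γ, x⟫ :=
    contDiff_const.inner ℝ contDiff_id
  exact contDiff_id.add ((contDiff_const.mul (contDiff_const.sub h2)).smul contDiff_const)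

theorem lap_planeRefl (hγ : ‖γ‖ = 1) (l : ℝ) {x : EuclideanSpace ℝ (Fin n)}
    {u : EuclideanSpace ℝ (Fin n) → ℝ} (hu : ContDiffAt ℝ 2 u (planeRefl γ l x)) :
    lap (fun y => u (planeRefl γ l y)) x = lap u (planeRefl γ l x) := by
  set R : EuclideanSpace ℝ (Fin n) →L[ℝ] EuclideanSpace ℝ (Fin n) :=
    (reflLin γ).toContinuousLinearEquiv.toContinuousLinearMap with hR
  have h1 : fderiv ℝ (fun y => u (planeRefl γ l y)) =ᶠ[𝓝 x]
      fun y => (fderiv ℝ u (planeRefl γ l y)).comp R := by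
    have hd : ∀ᶠ y in 𝓝 (planeRefl γ l x), DifferentiableAt ℝ u y :=
      (hu.eventually (by simp)).mono fun y hy => hy.differentiableAt (by norm_num)
    filter_upwards [(continuous_planeRefl γ l).continuousAt.eventually hd] with y hy
    exact (hy.hasFDerivAt.comp y (hasFDerivAt_planeRefl hγ l y)).fderiv
  have h2 : ∀ e, fderiv ℝ (fderiv ℝ (fun y => u (planeRefl γ l y))) x e e =
      fderiv ℝ (fderiv ℝ u) (planeRefl γ l x) (R e) (R e) := by
    intro e
    rw [h1.fderiv_eq]
    have h3 : HasFDerivAt (fun y => fderiv ℝ u (planeRefl γ l y))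
        ((fderiv ℝ (fderiv ℝ u) (planeRefl γ l x)).comp R) x :=
      (contDiffAt_fderiv_differentiableAt hu).hasFDerivAt.comp x (hasFDerivAt_planeRefl hγ l x)
    rw [(h3.clm_comp (hasFDerivAt_const R x)).fderiv]
    simp
  rw [lap_eq_sum _ x (EuclideanSpace.basisFun (Fin n) ℝ),
    lap_eq_sum _ _ ((EuclideanSpace.basisFun (Fin n) ℝ).map (reflLin γ))]
  refine Finset.sum_congr rfl fun i _ => ?_
  rw [h2]
  simp [hR]

end Refl

theorem le_of_hasDerivWithinAt_of_le {g : ℝ → ℝ} {g' κ : ℝ}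
    (hg : HasDerivWithinAt g g' (Ioi 0) 0) (h : ∀ᶠ t in 𝓝[>] (0 : ℝ), κ * t ≤ g t - g 0) :
    κ ≤ g' := by
  have hlim := (hasDerivWithinAt_iff_tendsto_slope' (by simp)).1 hg
  refine ge_of_tendsto hlim ?_
  filter_upwards [h, self_mem_nhdsWithin] with t ht ht0
  rw [slope_def_field, sub_zero, le_div_iff₀ ht0]
  exact ht

/-- Strong maximum principle: a nonnegative supersolution of `Δ - L` vanishing at an interior point
vanishes near it. -/
theorem strong_max {n : ℕ} {V : Set (EuclideanSpace ℝ (Fin n))} (hV : IsOpen V)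
    {w : EuclideanSpace ℝ (Fin n) → ℝ} {L : ℝ} (hL : 0 ≤ L)
    (hw2 : ∀ x ∈ V, ContDiffAt ℝ 2 w x) (hlw : ∀ x ∈ V, lap w x ≤ L * w x)
    (hw0 : ∀ x ∈ V, 0 ≤ w x) {x₀ : EuclideanSpace ℝ (Fin n)} (hx₀ : x₀ ∈ V) (h0 : w x₀ = 0) :
    ∀ᶠ y in 𝓝 x₀, w y = 0 := by
  obtain ⟨r, hr, hball⟩ := Metric.isOpen_iff.1 hV x₀ hx₀
  filter_upwards [ball_mem_nhds x₀ (half_pos hr)] with x₁ hx₁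
  by_contra hne
  have hwc : ContinuousOn w V := fun x hx => (hw2 x hx).continuousAt.continuousWithinAt
  have hx₁r : dist x₁ x₀ < r / 2 := hx₁
  -- the ball about `x₁` through a nearest zero `y` of `w` touches the zero set at `y`
  set Z := closedBall x₁ (dist x₁ x₀) ∩ w ⁻¹' {0} with hZ
  have hsub : closedBall x₁ (dist x₁ x₀) ⊆ V := by
    intro z hz
    apply hball
    have := dist_triangle z x₁ x₀
    rw [mem_closedBall] at hz
    rw [mem_ball]
    linarith
  have hZc : IsCompact Z := by
    apply (isCompact_closedBall x₁ _).of_isClosed_subset _ inter_subset_left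
    exact (hwc.mono hsub).preimage_isClosed_of_isClosed isClosed_closedBall isClosed_singleton
  have hZn : Z.Nonempty := ⟨x₀, by simp [hZ, dist_comm, h0]⟩
  obtain ⟨y, hyZ, hy⟩ := hZc.exists_isMinOn hZn (f := fun z => dist z x₁) (by fun_prop)
  have hyV : y ∈ V := hsub hyZ.1
  have hwy : w y = 0 := hyZ.2
  set d := dist y x₁ with hd
  have hd0 : 0 < d := dist_pos.2 (by rintro rfl; exact hne hwy)
  have hdr : d ≤ dist x₁ x₀ := hyZ.1
  have hposball : ∀ z ∈ ball x₁ d, 0 < w z := by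
    intro z hz
    have hzc : z ∈ closedBall x₁ (dist x₁ x₀) := (mem_ball.1 hz).le.trans hdr
    refine lt_of_le_of_ne (hw0 z (hsub hzc)) fun h => ?_
    have : d ≤ dist z x₁ := hy ⟨hzc, h.symm⟩
    exact absurd hz (by rw [mem_ball]; linarith)
  -- halving the ball makes `y` the only zero on its closure
  set c := midpoint ℝ y x₁ with hc
  have hyc : dist y c = d / 2 := by rw [hc, dist_left_midpoint]; simp [hd]; ring
  have hcx : dist c x₁ = d / 2 := by rw [hc, dist_midpoint_right]; simp [hd]; ring
  have hin : ∀ z ∈ closedBall c (d / 2), z ≠ y → z ∈ ball x₁ d := by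
    intro z hz hzy
    have hc2 : c - x₁ = y - c := by
      rw [hc, midpoint_eq_smul_add]; simp; module
    have h1 : ‖z - c‖ ≤ d / 2 := by rw [← dist_eq_norm]; exact hz
    have h2 : ‖y - c‖ = d / 2 := by rw [← dist_eq_norm]; exact hyc
    rw [mem_ball, dist_eq_norm, show z - x₁ = (z - c) + (y - c) by rw [← hc2]; abel]
    have h3 := parallelogram_law_with_norm ℝ (z - c) (y - c)
    have h4 : 0 < ‖z - c - (y - c)‖ := by
      rw [norm_pos_iff]; simpa [sub_eq_zero] using hzy
    have h5 : 0 ≤ ‖z - c + (y - c)‖ := norm_nonneg _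
    have h6 : 0 ≤ ‖z - c‖ := norm_nonneg _
    nlinarith
  have hsub2 : closedBall c (d / 2) ⊆ V := by
    intro z hz
    by_cases hzy : z = y
    · rw [hzy]; exact hyV
    · exact hsub ((mem_ball.1 (hin z hz hzy)).le.trans hdr)
  obtain ⟨κ, hκ, hk⟩ := hopf (c := c) (Q := y) (R := d / 2) (by positivity) hL hyc
    (hwc.mono hsub2) hwy.ge (fun z hz hzy => hposball z (hin z hz hzy))
    (fun z hz => ⟨hw2 z (hsub2 (ball_subset_closedBall hz)),
      hlw z (hsub2 (ball_subset_closedBall hz))⟩)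
  -- but `y` is a minimum of `w`, so the derivative there vanishes
  have hmin : IsLocalMin w y := by
    filter_upwards [hV.mem_nhds hyV] with z hz
    rw [hwy]; exact hw0 z hz
  have hder : HasDerivAt (fun t : ℝ => w (y + t • (c - y))) 0 0 := by
    have hl : HasDerivAt (fun t : ℝ => y + t • (c - y)) (c - y) 0 := by
      simpa using ((hasDerivAt_id (0 : ℝ)).smul_const (c - y)).const_add y
    have h1 : HasFDerivAt w (0 : EuclideanSpace ℝ (Fin n) →L[ℝ] ℝ) (y + (0 : ℝ) • (c - y)) := by
      have := ((hw2 y hyV).differentiableAt (by norm_num)).hasFDerivAt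
      rw [hmin.fderiv_eq_zero] at this
      simpa using this
    have := h1.comp_hasDerivAt 0 hl
    rw [zero_apply] at this
    exact this
  have : κ ≤ 0 := by
    refine le_of_hasDerivWithinAt_of_le (hder.hasDerivWithinAt (s := Ioi 0)) ?_
    filter_upwards [Ioo_mem_nhdsGT (show (0 : ℝ) < 1 / 2 by norm_num)] with t ht
    simpa [hwy] using hk t ⟨ht.1.le, ht.2.le⟩
  linarith

/-- The first exit point of a ray from an open set. -/
theorem exists_exit {E : Type*} [NormedAddCommGroup E] [NormedSpace ℝ E] {Ω : Set E}
    (hΩ : IsOpen Ω) {x v : E} (hx : x ∈ Ω) {s : ℝ} (hs : 0 ≤ s) (hout : x + s • v ∉ Ω) :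
    ∃ t, 0 < t ∧ t ≤ s ∧ x + t • v ∈ frontier Ω ∧ ∀ r, 0 ≤ r → r < t → x + r • v ∈ Ω := by
  have hc : Continuous fun r : ℝ => x + r • v := by fun_prop
  have hcomp : IsCompact (Icc 0 s ∩ (fun r : ℝ => x + r • v) ⁻¹' Ωᶜ) :=
    isCompact_Icc.inter_right (hΩ.isClosed_compl.preimage hc)
  obtain ⟨t, ht, hmin⟩ := hcomp.exists_isLeast ⟨s, ⟨hs, le_rfl⟩, hout⟩
  have htΩ : x + t • v ∉ Ω := ht.2
  have h0 : 0 < t := by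
    refine lt_of_le_of_ne ht.1.1 ?_
    rintro rfl
    exact htΩ (by simpa using hx)
  have hin : ∀ r, 0 ≤ r → r < t → x + r • v ∈ Ω := by
    intro r hr hrt
    by_contra hn
    exact absurd (hmin ⟨⟨hr, hrt.le.trans ht.1.2⟩, hn⟩) (not_le.2 hrt)
  refine ⟨t, h0, ht.1.2, ?_, hin⟩
  rw [hΩ.frontier_eq]
  refine ⟨?_, htΩ⟩
  have h1 : Tendsto (fun r : ℝ => x + r • v) (𝓝[<] t) (𝓝 (x + t • v)) :=
    (hc.tendsto t).mono_left nhdsWithin_le_nhds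
  refine mem_closure_of_tendsto h1 ?_
  filter_upwards [Ioo_mem_nhdsLT h0] with r hr
  exact hin r hr.1.le hr.2

/-! ### Geometry of a `C²` boundary -/

/-- `φ` is a local defining function of `Ω` on the open set `U`, as in `IsC2Domain`. -/
structure LocalDef {n : ℕ} (Ω U : Set (EuclideanSpace ℝ (Fin n)))
    (φ : EuclideanSpace ℝ (Fin n) → ℝ) : Prop where
  isOpen : IsOpen U
  contDiff : ContDiffOn ℝ 2 φ U
  ne : ∀ y ∈ U, gradient φ y ≠ 0
  inside : Ω ∩ U = {y ∈ U | φ y < 0}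
  bdry : frontier Ω ∩ U = {y ∈ U | φ y = 0}

/-- All directions `v` with `⟪ν, v⟫ < 0` point from `q` into `Ω`. -/
def InwardAt {n : ℕ} (Ω : Set (EuclideanSpace ℝ (Fin n))) (q ν : EuclideanSpace ℝ (Fin n)) :
    Prop :=
  ∀ v, ⟪ν, v⟫ < 0 → ∀ᶠ t in 𝓝[>] (0 : ℝ), q + t • v ∈ Ω

/-- `ν` is the outer unit normal of the `C²` domain `Ω` at the boundary point `Q`: there is an
interior touching ball, directions are sorted into inward and outward ones by the sign of
`⟪ν, ·⟫`, and each `τ ⊥ ν` is a limit of secants through boundary points `Q + d k` at which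
tangent vectors `τ' k` converging to `τ` exist. -/
structure BdryNormal {n : ℕ} (Ω : Set (EuclideanSpace ℝ (Fin n)))
    (Q ν : EuclideanSpace ℝ (Fin n)) : Prop where
  mem : Q ∈ frontier Ω
  norm : ‖ν‖ = 1
  ball : ∃ R > 0, ∀ x, dist x (Q - R • ν) ≤ R → x ≠ Q → x ∈ Ω
  inward : InwardAt Ω Q ν
  outward : ∀ v, 0 < ⟪ν, v⟫ → ∀ᶠ t in 𝓝[>] (0 : ℝ), Q + t • v ∉ closure Ω
  tangent : ∀ τ, ⟪ν, τ⟫ = 0 → ∃ (d : ℕ → EuclideanSpace ℝ (Fin n)) (c : ℕ → ℝ)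
    (τ' ν' : ℕ → EuclideanSpace ℝ (Fin n)), Tendsto d atTop (𝓝 0) ∧
      Tendsto (fun k => c k • d k) atTop (𝓝 τ) ∧ Tendsto τ' atTop (𝓝 τ) ∧
      ∀ᶠ k in atTop, Q + d k ∈ frontier Ω ∧ ν' k ≠ 0 ∧ ⟪ν' k, τ' k⟫ = 0 ∧
        InwardAt Ω (Q + d k) (ν' k)

section Geometry

variable {n : ℕ} {Ω U : Set (EuclideanSpace ℝ (Fin n))} {φ : EuclideanSpace ℝ (Fin n) → ℝ}

theorem fderiv_eq_inner_gradient (φ : EuclideanSpace ℝ (Fin n) → ℝ)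
    (x v : EuclideanSpace ℝ (Fin n)) : fderiv ℝ φ x v = ⟪gradient φ x, v⟫ := by
  simp [gradient]

theorem eventually_pos_of_fderiv_pos {q v : EuclideanSpace ℝ (Fin n)}
    (hφ : DifferentiableAt ℝ φ q) (h0 : φ q = 0) (h : 0 < fderiv ℝ φ q v) :
    ∀ᶠ t in 𝓝[>] (0 : ℝ), 0 < φ (q + t • v) := by
  have hl : HasDerivAt (fun t : ℝ => q + t • v) v 0 := by
    simpa using ((hasDerivAt_id (0 : ℝ)).smul_const v).const_add q
  have h1 : HasFDerivAt φ (fderiv ℝ φ q) (q + (0 : ℝ) • v) := by simpa using hφ.hasFDerivAt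
  have h2 : HasDerivAt (fun t : ℝ => φ (q + t • v)) (fderiv ℝ φ q v) 0 := h1.comp_hasDerivAt 0 hl
  have hlim := (hasDerivWithinAt_iff_tendsto_slope' (by simp)).1
    (h2.hasDerivWithinAt (s := Ioi 0))
  filter_upwards [hlim.eventually (lt_mem_nhds h), self_mem_nhdsWithin] with t ht ht0
  rw [slope_def_field, sub_zero] at ht
  simp only [zero_smul, add_zero, h0, sub_zero] at ht
  exact (div_pos_iff_of_pos_right ht0).1 ht

theorem eventually_neg_of_fderiv_neg {q v : EuclideanSpace ℝ (Fin n)}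
    (hφ : DifferentiableAt ℝ φ q) (h0 : φ q = 0) (h : fderiv ℝ φ q v < 0) :
    ∀ᶠ t in 𝓝[>] (0 : ℝ), φ (q + t • v) < 0 := by
  have := eventually_pos_of_fderiv_pos (φ := fun x => - φ x) (v := v) hφ.neg (by simp [h0])
    (by rw [fderiv_fun_neg]; simpa using h)
  simpa using this

theorem tendsto_line (q v : EuclideanSpace ℝ (Fin n)) :
    Tendsto (fun t : ℝ => q + t • v) (𝓝[>] 0) (𝓝 q) := by
  have hc : Continuous fun t : ℝ => q + t • v := by fun_prop
  simpa using (hc.tendsto 0).mono_left nhdsWithin_le_nhds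

namespace LocalDef

theorem contDiffAt (h : LocalDef Ω U φ) {y : EuclideanSpace ℝ (Fin n)} (hy : y ∈ U) :
    ContDiffAt ℝ 2 φ y :=
  h.contDiff.contDiffAt (h.isOpen.mem_nhds hy)

theorem mem_iff (h : LocalDef Ω U φ) {y : EuclideanSpace ℝ (Fin n)} (hy : y ∈ U) :
    y ∈ Ω ↔ φ y < 0 := by
  have := Set.ext_iff.1 h.inside y
  simpa [hy] using this

theorem mem_frontier_iff (h : LocalDef Ω U φ) {y : EuclideanSpace ℝ (Fin n)} (hy : y ∈ U) :
    y ∈ frontier Ω ↔ φ y = 0 := by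
  have := Set.ext_iff.1 h.bdry y
  simpa [hy] using this

theorem le_of_mem_closure (h : LocalDef Ω U φ) {y : EuclideanSpace ℝ (Fin n)}
    (hy : y ∈ U) (hc : y ∈ closure Ω) : φ y ≤ 0 := by
  rw [closure_eq_self_union_frontier] at hc
  rcases hc with hc | hc
  · exact ((h.mem_iff hy).1 hc).le
  · exact ((h.mem_frontier_iff hy).1 hc).le

theorem inwardAt (h : LocalDef Ω U φ) {q : EuclideanSpace ℝ (Fin n)} (hq : q ∈ U)
    (hf : q ∈ frontier Ω) : InwardAt Ω q (gradient φ q) := by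
  intro v hv
  rw [← fderiv_eq_inner_gradient] at hv
  filter_upwards [eventually_neg_of_fderiv_neg ((h.contDiffAt hq).differentiableAt (by norm_num))
    ((h.mem_frontier_iff hq).1 hf) hv, (tendsto_line q v).eventually (h.isOpen.mem_nhds hq)]
    with t h1 h2
  exact (h.mem_iff h2).2 h1

theorem outwardAt (h : LocalDef Ω U φ) {q : EuclideanSpace ℝ (Fin n)} (hq : q ∈ U)
    (hf : q ∈ frontier Ω) {v : EuclideanSpace ℝ (Fin n)} (hv : 0 < ⟪gradient φ q, v⟫) :
    ∀ᶠ t in 𝓝[>] (0 : ℝ), q + t • v ∉ closure Ω := by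
  rw [← fderiv_eq_inner_gradient] at hv
  filter_upwards [eventually_pos_of_fderiv_pos ((h.contDiffAt hq).differentiableAt (by norm_num))
    ((h.mem_frontier_iff hq).1 hf) hv, (tendsto_line q v).eventually (h.isOpen.mem_nhds hq)]
    with t h1 h2 h3
  linarith [h.le_of_mem_closure h2 h3]

theorem continuousAt_gradient (h : LocalDef Ω U φ) {q : EuclideanSpace ℝ (Fin n)} (hq : q ∈ U) :
    ContinuousAt (gradient φ) q := by
  have h1 : ContinuousAt (fderiv ℝ φ) q :=
    ((h.contDiffAt hq).fderiv_right (m := 1) (by norm_num)).continuousAt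
  unfold gradient
  exact (LinearIsometryEquiv.continuous _).continuousAt.comp h1

/-- Interior touching ball, from the second-order Taylor estimate of the defining function. -/
theorem exists_ball (h : LocalDef Ω U φ) {Q : EuclideanSpace ℝ (Fin n)} (hQ : Q ∈ U)
    (hf : Q ∈ frontier Ω) : ∃ R > 0, ∀ x,
      dist x (Q - R • (‖gradient φ Q‖⁻¹ • gradient φ Q)) ≤ R → x ≠ Q → x ∈ Ω := by
  set N := gradient φ Q with hN
  have hN0 : 0 < ‖N‖ := norm_pos_iff.2 (h.ne Q hQ)
  set ν := ‖N‖⁻¹ • N with hν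
  have hν1 : ‖ν‖ = 1 := by rw [hν, norm_smul, norm_inv, norm_norm, inv_mul_cancel₀ hN0.ne']
  have hNν : N = ‖N‖ • ν := by rw [hν, smul_smul, mul_inv_cancel₀ hN0.ne', one_smul]
  obtain ⟨C, t, ht, hC⟩ := ((h.contDiffAt hQ).fderiv_right (m := 1)
    (by norm_num)).exists_lipschitzOnWith
  obtain ⟨ρ, hρ, hball⟩ := Metric.mem_nhds_iff.1 (inter_mem ht (h.isOpen.mem_nhds hQ))
  have hφ0 : φ Q = 0 := (h.mem_frontier_iff hQ).1 hf
  have htay : ∀ x ∈ ball Q ρ, φ x ≤ ⟪N, x - Q⟫ + C * ‖x - Q‖ * ‖x - Q‖ := by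
    intro x hx
    have hsub : closedBall Q (dist x Q) ⊆ ball Q ρ := closedBall_subset_ball hx
    have h1 := Convex.norm_image_sub_le_of_norm_hasFDerivWithin_le' (𝕜 := ℝ) (f := φ)
      (f' := fderiv ℝ φ) (φ := fderiv ℝ φ Q) (C := C * ‖x - Q‖) (s := closedBall Q (dist x Q))
      (x := Q) (y := x)
      (fun y hy => ((h.contDiffAt (hball (hsub hy)).2).differentiableAt
        (by norm_num)).hasFDerivAt.hasFDerivWithinAt)
      (fun y hy => by
        have h2 := hC.dist_le_mul y (hball (hsub hy)).1 Q (hball (mem_ball_self hρ)).1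
        rw [dist_eq_norm] at h2
        refine h2.trans (mul_le_mul_of_nonneg_left ?_ C.2)
        rw [← dist_eq_norm]; exact hy)
      (convex_closedBall _ _) (by simp) (by simp)
    rw [hφ0, fderiv_eq_inner_gradient, ← hN, Real.norm_eq_abs] at h1
    have := (abs_le.1 h1).2
    linarith
  refine ⟨min (ρ / 4) (‖N‖ / (4 * (C + 1))), by positivity, fun x hx hxQ => ?_⟩
  set R := min (ρ / 4) (‖N‖ / (4 * (C + 1))) with hRdef
  have hR0 : 0 < R := by positivity
  have hR1 : R ≤ ρ / 4 := min_le_left _ _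
  have hR2 : R * (4 * (C + 1)) ≤ ‖N‖ := by
    have : R ≤ ‖N‖ / (4 * (C + 1)) := min_le_right _ _
    rwa [le_div_iff₀ (by positivity)] at this
  have hxb : x ∈ Metric.ball Q ρ := by
    have h1 := dist_triangle x (Q - R • ν) Q
    have h2 : dist (Q - R • ν) Q = R := by
      rw [dist_eq_norm, sub_sub_cancel_left, norm_neg, norm_smul, hν1, mul_one, Real.norm_eq_abs,
        abs_of_pos hR0]
    rw [mem_ball]; linarith
  rw [h.mem_iff (hball hxb).2]
  have hxn : 0 < ‖x - Q‖ := norm_pos_iff.2 (sub_ne_zero.2 hxQ)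
  have h3 : ‖x - Q‖ ^ 2 + 2 * R * ⟪ν, x - Q⟫ ≤ 0 := by
    have h4 : ‖(x - Q) + R • ν‖ ≤ R := by
      rw [dist_eq_norm] at hx
      rwa [show x - Q + R • ν = x - (Q - R • ν) by abel]
    have h5 : ‖(x - Q) + R • ν‖ ^ 2 ≤ R ^ 2 := by gcongr
    rw [norm_add_sq_real, inner_smul_right, norm_smul, hν1, Real.norm_eq_abs, mul_one, sq_abs,
      real_inner_comm] at h5
    linarith
  refine lt_of_le_of_lt (htay x hxb) ?_
  rw [hNν, inner_smul_left]
  simp only [conj_trivial]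
  have hC0 : (0 : ℝ) ≤ C := C.2
  set m := ‖x - Q‖
  set p := ⟪ν, x - Q⟫
  have h6 : ‖N‖ * m ^ 2 + 2 * R * (‖N‖ * p) ≤ 0 := by nlinarith
  have h7 : R * (4 * (C + 1)) * m ^ 2 ≤ ‖N‖ * m ^ 2 := by gcongr
  have h8 : R * (4 * (C + 1) * m ^ 2 + 2 * (‖N‖ * p)) ≤ 0 := by nlinarith
  have h9 : 4 * (C + 1) * m ^ 2 + 2 * (‖N‖ * p) ≤ 0 := by
    by_contra! hh
    exact absurd h8 (not_le.2 (mul_pos hR0 hh))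
  nlinarith [mul_pos hxn hxn, mul_nonneg hC0 (sq_nonneg m)]

theorem exists_tangent (h : LocalDef Ω U φ) {Q : EuclideanSpace ℝ (Fin n)} (hQ : Q ∈ U)
    (hf : Q ∈ frontier Ω) {τ : EuclideanSpace ℝ (Fin n)} (hτ : ⟪gradient φ Q, τ⟫ = 0) :
    ∃ (d : ℕ → EuclideanSpace ℝ (Fin n)) (c : ℕ → ℝ)
      (τ' ν' : ℕ → EuclideanSpace ℝ (Fin n)), Tendsto d atTop (𝓝 0) ∧
      Tendsto (fun k => c k • d k) atTop (𝓝 τ) ∧ Tendsto τ' atTop (𝓝 τ) ∧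
      ∀ᶠ k in atTop, Q + d k ∈ frontier Ω ∧ ν' k ≠ 0 ∧ ⟪ν' k, τ' k⟫ = 0 ∧
        InwardAt Ω (Q + d k) (ν' k) := by
  set N := gradient φ Q with hN
  have hNN : 0 < ⟪N, N⟫ := real_inner_self_pos.2 (h.ne Q hQ)
  have hφ0 : φ Q = 0 := (h.mem_frontier_iff hQ).1 hf
  have hdφ := (h.contDiffAt hQ).differentiableAt (n := 2) (by norm_num)
  -- intermediate value theorem on the segment between `Q + t (τ - δ N)` and `Q + t (τ + δ N)`
  have key : ∀ k : ℕ, ∃ t s : ℝ, 0 < t ∧ t < 1 / ((k : ℝ) + 1) ∧ |s| ≤ 1 / ((k : ℝ) + 1) ∧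
      Q + t • (τ + s • N) ∈ frontier Ω := by
    intro k
    set δ : ℝ := 1 / ((k : ℝ) + 1) with hδ
    have hδ0 : 0 < δ := by positivity
    obtain ⟨ρ, hρ, hball⟩ := Metric.isOpen_iff.1 h.isOpen Q hQ
    have e1 := eventually_pos_of_fderiv_pos (v := τ + δ • N) hdφ hφ0 (by
      rw [fderiv_eq_inner_gradient, ← hN, inner_add_right, hτ, inner_smul_right, zero_add]
      positivity)
    have e2 := eventually_neg_of_fderiv_neg (v := τ + (-δ) • N) hdφ hφ0 (by
      rw [fderiv_eq_inner_gradient, ← hN, inner_add_right, hτ, inner_smul_right, zero_add]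
      nlinarith)
    have hM : 0 < ‖τ‖ + δ * ‖N‖ + 1 := by positivity
    have e3 : ∀ᶠ t in 𝓝[>] (0 : ℝ), t ∈ Ioo 0 (min δ (ρ / (‖τ‖ + δ * ‖N‖ + 1))) :=
      Ioo_mem_nhdsGT (by positivity)
    obtain ⟨t, h1, h2, h3⟩ := (e1.and (e2.and e3)).exists
    have ht1 : t < δ := h3.2.trans_le (min_le_left _ _)
    have ht2 : t * (‖τ‖ + δ * ‖N‖ + 1) < ρ := by
      rw [← lt_div_iff₀ hM]; exact h3.2.trans_le (min_le_right _ _)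
    have hU : ∀ s ∈ Icc (-δ) δ, Q + t • (τ + s • N) ∈ U := by
      intro s hs
      apply hball
      rw [mem_ball, dist_eq_norm, add_sub_cancel_left, norm_smul, Real.norm_eq_abs,
        abs_of_pos h3.1]
      have : ‖τ + s • N‖ ≤ ‖τ‖ + δ * ‖N‖ := by
        refine (norm_add_le _ _).trans ?_
        rw [norm_smul, Real.norm_eq_abs]
        gcongr
        exact abs_le.2 hs
      nlinarith [h3.1]
    have hcont : ContinuousOn (fun s : ℝ => φ (Q + t • (τ + s • N))) (Icc (-δ) δ) :=
      h.contDiff.continuousOn.comp (by fun_prop) hU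
    obtain ⟨s, hs, hs0⟩ := intermediate_value_Icc (by linarith) hcont ⟨h2.le, h1.le⟩
    exact ⟨t, s, h3.1, ht1, abs_le.2 hs, (h.mem_frontier_iff (hU s hs)).2 hs0⟩
  choose t s ht0 ht1 hs hfr using key
  have hlim0 : Tendsto (fun k : ℕ => 1 / ((k : ℝ) + 1)) atTop (𝓝 0) :=
    tendsto_one_div_add_atTop_nhds_zero_nat
  have htl : Tendsto t atTop (𝓝 0) :=
    squeeze_zero (fun k => (ht0 k).le) (fun k => (ht1 k).le) hlim0
  have hsl : Tendsto s atTop (𝓝 0) := squeeze_zero_norm hs hlim0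
  have hcl : Tendsto (fun k => τ + s k • N) atTop (𝓝 τ) := by
    simpa using (hsl.smul_const N).const_add τ
  have hdl : Tendsto (fun k => t k • (τ + s k • N)) atTop (𝓝 0) := by
    simpa using htl.smul hcl
  have hQd : Tendsto (fun k => Q + t k • (τ + s k • N)) atTop (𝓝 Q) := by
    simpa using hdl.const_add Q
  have hNl : Tendsto (fun k => gradient φ (Q + t k • (τ + s k • N))) atTop (𝓝 N) :=
    (h.continuousAt_gradient hQ).tendsto.comp hQd
  have hNτ : Tendsto (fun k => ⟪gradient φ (Q + t k • (τ + s k • N)), τ⟫) atTop (𝓝 0) := by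
    rw [← hτ]; exact hNl.inner tendsto_const_nhds
  have hNNl : Tendsto (fun k => ⟪gradient φ (Q + t k • (τ + s k • N)), N⟫) atTop (𝓝 ⟪N, N⟫) :=
    hNl.inner tendsto_const_nhds
  refine ⟨fun k => t k • (τ + s k • N), fun k => (t k)⁻¹,
    fun k => τ - (⟪gradient φ (Q + t k • (τ + s k • N)), τ⟫ /
      ⟪gradient φ (Q + t k • (τ + s k • N)), N⟫) • N,
    fun k => gradient φ (Q + t k • (τ + s k • N)), hdl, ?_, ?_, ?_⟩
  · refine hcl.congr fun k => ?_
    rw [smul_smul, inv_mul_cancel₀ (ht0 k).ne', one_smul]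
  · have := ((hNτ.div hNNl hNN.ne').smul_const N).const_sub τ
    simpa using this
  · filter_upwards [hNNl.eventually (lt_mem_nhds hNN),
      hQd.eventually (h.isOpen.mem_nhds hQ)] with k hk hkU
    refine ⟨hfr k, h.ne _ hkU, ?_, h.inwardAt hkU (hfr k)⟩
    rw [inner_sub_right, inner_smul_right, div_mul_cancel₀ _ hk.ne', sub_self]

end LocalDef

theorem exists_bdryNormal (hΩ : IsC2Domain Ω) {Q : EuclideanSpace ℝ (Fin n)}
    (hQ : Q ∈ frontier Ω) : ∃ ν, BdryNormal Ω Q ν := by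
  obtain ⟨U, φ, h1, hQU, h2, h3, h4, h5⟩ := hΩ Q hQ
  have h : LocalDef Ω U φ := ⟨h1, h2, h3, h4, h5⟩
  have hN0 : 0 < ‖gradient φ Q‖ := norm_pos_iff.2 (h.ne Q hQU)
  have hin : ∀ v, ⟪‖gradient φ Q‖⁻¹ • gradient φ Q, v⟫ = ‖gradient φ Q‖⁻¹ * ⟪gradient φ Q, v⟫ := by
    intro v
    rw [inner_smul_left]; simp
  refine ⟨‖gradient φ Q‖⁻¹ • gradient φ Q, hQ, ?_, h.exists_ball hQU hQ, ?_, ?_, ?_⟩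
  · rw [norm_smul, norm_inv, norm_norm, inv_mul_cancel₀ hN0.ne']
  · intro v hv
    rw [hin] at hv
    exact h.inwardAt hQU hQ v (by
      by_contra! hh
      exact absurd hv (not_lt.2 (by positivity)))
  · intro v hv
    rw [hin] at hv
    exact h.outwardAt hQU hQ ((mul_pos_iff_of_pos_left (by positivity)).1 hv)
  · intro τ hτ
    rw [hin] at hτ
    exact h.exists_tangent hQU hQ ((mul_eq_zero.1 hτ).resolve_left (by positivity))

theorem uniqueDiffOn_closure (hΩo : IsOpen Ω) (hΩ : IsC2Domain Ω) :
    UniqueDiffOn ℝ (closure Ω) := by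
  intro x hx
  rw [closure_eq_self_union_frontier] at hx
  rcases hx with hx | hx
  · exact (hΩo.uniqueDiffWithinAt hx).mono subset_closure
  · obtain ⟨ν, hν⟩ := exists_bdryNormal hΩ hx
    obtain ⟨R, hR, hball⟩ := hν.ball
    have hd : dist x (x - R • ν) = R := by
      rw [dist_eq_norm, sub_sub_cancel, norm_smul, hν.norm, mul_one, Real.norm_eq_abs,
        abs_of_pos hR]
    refine (uniqueDiffWithinAt_convex (convex_closedBall (x - R • ν) R) ?_ ?_).mono ?_
    · exact ⟨x - R • ν, ball_subset_interior_closedBall (mem_ball_self hR)⟩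
    · exact subset_closure (by rw [mem_closedBall, hd])
    · intro y hy
      by_cases hyx : y = x
      · rw [hyx]; exact frontier_subset_closure hx
      · exact subset_closure (hball y hy hyx)

end Geometry

/-! ### Regularity up to the boundary -/

/-- `G` and `H` are the first and second derivative of `u ∈ C²(cl Ω)`, up to the boundary. -/
structure Reg {n : ℕ} (Ω : Set (EuclideanSpace ℝ (Fin n))) (u : EuclideanSpace ℝ (Fin n) → ℝ)
    (G : EuclideanSpace ℝ (Fin n) → EuclideanSpace ℝ (Fin n) →L[ℝ] ℝ)
    (H : EuclideanSpace ℝ (Fin n) → EuclideanSpace ℝ (Fin n) →L[ℝ] EuclideanSpace ℝ (Fin n) →L[ℝ] ℝ)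
    : Prop where
  dG : ∀ x ∈ closure Ω, HasFDerivWithinAt u (G x) (closure Ω) x
  dH : ∀ x ∈ closure Ω, HasFDerivWithinAt G (H x) (closure Ω) x
  cH : ContinuousOn H (closure Ω)
  contDiffAt : ∀ x ∈ Ω, ContDiffAt ℝ 2 u x
  eqG : ∀ x ∈ Ω, fderiv ℝ u x = G x
  eqH : ∀ x ∈ Ω, fderiv ℝ (fderiv ℝ u) x = H x
  symm : ∀ x ∈ closure Ω, ∀ v w, H x v w = H x w v

theorem exists_reg {n : ℕ} {Ω : Set (EuclideanSpace ℝ (Fin n))} (hΩo : IsOpen Ω)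
    (hΩ : IsC2Domain Ω) {u : EuclideanSpace ℝ (Fin n) → ℝ} (hu : ContDiffOn ℝ 2 u (closure Ω)) :
    ∃ G H, Reg Ω u G H := by
  have hU := uniqueDiffOn_closure hΩo hΩ
  have hG : ContDiffOn ℝ 1 (fderivWithin ℝ u (closure Ω)) (closure Ω) :=
    hu.fderivWithin hU (by norm_num)
  have hnh : ∀ x ∈ Ω, closure Ω ∈ 𝓝 x := fun x hx =>
    mem_of_superset (hΩo.mem_nhds hx) subset_closure
  refine ⟨fderivWithin ℝ u (closure Ω), fderivWithin ℝ (fderivWithin ℝ u (closure Ω)) (closure Ω),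
    ?_, ?_, ?_, ?_, ?_, ?_, ?_⟩
  · exact fun x hx => (hu.differentiableOn (by norm_num) x hx).hasFDerivWithinAt
  · exact fun x hx => (hG.differentiableOn (by norm_num) x hx).hasFDerivWithinAt
  · exact hG.continuousOn_fderivWithin hU (by norm_num)
  · exact fun x hx => hu.contDiffAt (hnh x hx)
  · exact fun x hx => (fderivWithin_of_mem_nhds (hnh x hx)).symm
  · intro x hx
    have h1 : fderiv ℝ u =ᶠ[𝓝 x] fderivWithin ℝ u (closure Ω) := by
      filter_upwards [hΩo.mem_nhds hx] with y hy
      exact (fderivWithin_of_mem_nhds (hnh y hy)).symm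
    rw [h1.fderiv_eq, fderivWithin_of_mem_nhds (hnh x hx)]
  · intro x hx v w
    have hs : IsSymmSndFDerivWithinAt ℝ u (closure Ω) x :=
      (hu x hx).isSymmSndFDerivWithinAt (by simp) hU
        (closure_mono (interior_maximal subset_closure hΩo) hx) hx
    exact hs v w

section RegLemmas

variable {n : ℕ} {Ω : Set (EuclideanSpace ℝ (Fin n))} {u : EuclideanSpace ℝ (Fin n) → ℝ}
    {G : EuclideanSpace ℝ (Fin n) → EuclideanSpace ℝ (Fin n) →L[ℝ] ℝ}
    {H : EuclideanSpace ℝ (Fin n) → EuclideanSpace ℝ (Fin n) →L[ℝ] EuclideanSpace ℝ (Fin n) →L[ℝ] ℝ}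

theorem Reg.cG (h : Reg Ω u G H) : ContinuousOn G (closure Ω) :=
  fun x hx => (h.dH x hx).continuousWithinAt

theorem Reg.cu (h : Reg Ω u G H) : ContinuousOn u (closure Ω) :=
  fun x hx => (h.dG x hx).continuousWithinAt

/-- One-sided derivatives along a ray running into `cl Ω`. -/
theorem hasDerivWithinAt_ray {F : Type*} [NormedAddCommGroup F] [NormedSpace ℝ F]
    {g : EuclideanSpace ℝ (Fin n) → F} {g' : EuclideanSpace ℝ (Fin n) →L[ℝ] F}
    {x v : EuclideanSpace ℝ (Fin n)} (hg : HasFDerivWithinAt g g' (closure Ω) x)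
    (hv : ∀ᶠ t in 𝓝[>] (0 : ℝ), x + t • v ∈ closure Ω) :
    HasDerivWithinAt (fun t : ℝ => g (x + t • v)) (g' v) (Ioi 0) 0 := by
  have hl : HasDerivAt (fun t : ℝ => x + t • v) v 0 := by
    simpa using ((hasDerivAt_id (0 : ℝ)).smul_const v).const_add x
  have hg' : HasFDerivWithinAt g g' (closure Ω) (x + (0 : ℝ) • v) := by simpa using hg
  have h1 : HasDerivWithinAt (fun t : ℝ => g (x + t • v)) (g' v)
      ((fun t : ℝ => x + t • v) ⁻¹' closure Ω) 0 :=
    hg'.comp_hasDerivWithinAt 0 (hl.hasDerivWithinAt) (mapsTo_preimage _ _)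
  exact h1.mono_of_mem_nhdsWithin hv

/-- Derivative along a line inside `Ω`. -/
theorem Reg.hasDerivAt_line (h : Reg Ω u G H) {x v : EuclideanSpace ℝ (Fin n)} {t : ℝ}
    (ht : x + t • v ∈ Ω) :
    HasDerivAt (fun t : ℝ => u (x + t • v)) (G (x + t • v) v) t := by
  have hl : HasDerivAt (fun t : ℝ => x + t • v) v t := by
    simpa using ((hasDerivAt_id t).smul_const v).const_add x
  have h1 := ((h.contDiffAt _ ht).differentiableAt (by norm_num)).hasFDerivAt
  rw [h.eqG _ ht] at h1
  exact h1.comp_hasDerivAt t hl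

theorem Reg.hasDerivAt_line_G (hΩo : IsOpen Ω) (h : Reg Ω u G H)
    {x v : EuclideanSpace ℝ (Fin n)} (e : EuclideanSpace ℝ (Fin n)) {t : ℝ}
    (ht : x + t • v ∈ Ω) :
    HasDerivAt (fun t : ℝ => G (x + t • v) e) (H (x + t • v) v e) t := by
  have hl : HasDerivAt (fun t : ℝ => x + t • v) v t := by
    simpa using ((hasDerivAt_id t).smul_const v).const_add x
  have h1 : HasFDerivAt G (H (x + t • v)) (x + t • v) :=
    (h.dH _ (subset_closure ht)).hasFDerivAt
      (mem_of_superset (hΩo.mem_nhds ht) subset_closure)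
  exact hasDerivAt_apply_const (h1.comp_hasDerivAt t hl) e

theorem Reg.lap_eq (h : Reg Ω u G H) {x : EuclideanSpace ℝ (Fin n)} (hx : x ∈ Ω)
    (b : OrthonormalBasis (Fin n) ℝ (EuclideanSpace ℝ (Fin n))) :
    lap u x = ∑ i, H x (b i) (b i) := by
  rw [lap_eq_sum u x b, h.eqH x hx]

end RegLemmas

/-! ### The critical position of the plane -/

section Critical

variable {n : ℕ} {Ω : Set (EuclideanSpace ℝ (Fin n))} {γ : EuclideanSpace ℝ (Fin n)}
  {lam0 lamc : ℝ}

theorem inner_add_smul_self (hγ : ‖γ‖ = 1) (x : EuclideanSpace ℝ (Fin n)) (t : ℝ) :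
    ⟪γ, x + t • γ⟫ = ⟪γ, x⟫ + t := by
  rw [inner_add_right, inner_smul_right, real_inner_self_eq_norm_sq, hγ]; ring

theorem not_mem_of_mem_frontier (hΩo : IsOpen Ω) {x : EuclideanSpace ℝ (Fin n)}
    (hx : x ∈ frontier Ω) : x ∉ Ω := by
  rw [hΩo.frontier_eq] at hx; exact hx.2

theorem mem_frontier_of_not_mem (hΩo : IsOpen Ω) {x : EuclideanSpace ℝ (Fin n)}
    (hx : x ∈ closure Ω) (hx' : x ∉ Ω) : x ∈ frontier Ω := by
  rw [hΩo.frontier_eq]; exact ⟨hx, hx'⟩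

theorem inner_lt_lam0 (hΩo : IsOpen Ω) (hγ : ‖γ‖ = 1)
    (hle : ∀ x ∈ closure Ω, ⟪γ, x⟫ ≤ lam0) {x : EuclideanSpace ℝ (Fin n)} (hx : x ∈ Ω) :
    ⟪γ, x⟫ < lam0 := by
  have h1 : ∀ᶠ t in 𝓝[>] (0 : ℝ), x + t • γ ∈ Ω := (tendsto_line x γ).eventually (hΩo.mem_nhds hx)
  obtain ⟨t, ht, ht0⟩ := (h1.and self_mem_nhdsWithin).exists
  have h2 := hle _ (subset_closure ht)
  rw [inner_add_smul_self hγ] at h2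
  have : (0 : ℝ) < t := ht0
  linarith

/-- Planes close to the first touching position have their reflected caps inside `Ω`. At a
touching point the gradient of a defining function has positive component along `γ`, so a
defining function increases along `γ` nearby. -/
theorem exists_start (hΩo : IsOpen Ω) (hΩb : IsBounded Ω) (hΩ : IsC2Domain Ω) (hγ : ‖γ‖ = 1)
    (hle : ∀ x ∈ closure Ω, ⟪γ, x⟫ ≤ lam0) :
    ∃ l < lam0, ∀ μ, l < μ → μ < lam0 → planeRefl γ μ '' planeCap Ω γ μ ⊆ Ω := by
  by_contra! hcon
  have hseq : ∀ k : ℕ, ∃ μ x, lam0 - 1 / ((k : ℝ) + 1) < μ ∧ μ < lam0 ∧ x ∈ Ω ∧ μ < ⟪γ, x⟫ ∧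
      planeRefl γ μ x ∉ Ω := by
    intro k
    obtain ⟨μ, h1, h2, h3⟩ := hcon (lam0 - 1 / ((k : ℝ) + 1))
      (by have : 0 < 1 / ((k : ℝ) + 1) := by positivity
          linarith)
    rw [Set.not_subset] at h3
    obtain ⟨y, ⟨x, hx, rfl⟩, hy⟩ := h3
    exact ⟨μ, x, h1, h2, hx.1, hx.2, hy⟩
  choose μ x h1 h2 h3 h4 h5 using hseq
  obtain ⟨p, hp, σ, hσ, hlim⟩ := (hΩb.isCompact_closure).tendsto_subseq
    (fun k => subset_closure (h3 k))
  have hone : Tendsto (fun k : ℕ => lam0 - 1 / ((k : ℝ) + 1)) atTop (𝓝 lam0) := by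
    simpa using (tendsto_const_nhds (x := lam0)).sub tendsto_one_div_add_atTop_nhds_zero_nat
  have hμ : Tendsto μ atTop (𝓝 lam0) :=
    tendsto_of_tendsto_of_tendsto_of_le_of_le hone tendsto_const_nhds
      (fun k => (h1 k).le) (fun k => (h2 k).le)
  have hμσ : Tendsto (fun k => μ (σ k)) atTop (𝓝 lam0) := hμ.comp hσ.tendsto_atTop
  have hγx : Tendsto (fun k => ⟪γ, x (σ k)⟫) atTop (𝓝 ⟪γ, p⟫) :=
    tendsto_const_nhds.inner hlim
  have hγp : ⟪γ, p⟫ = lam0 := le_antisymm (hle p hp) (le_of_tendsto_of_tendsto' hμσ hγx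
    (fun k => (h4 _).le))
  have hpΩ : p ∉ Ω := fun h => by linarith [inner_lt_lam0 hΩo hγ hle h]
  obtain ⟨U, φ, hU, hpU, hφ, hne, hin, hbd⟩ := hΩ p (mem_frontier_of_not_mem hΩo hp hpΩ)
  have hd : LocalDef Ω U φ := ⟨hU, hφ, hne, hin, hbd⟩
  have hNγ : 0 < ⟪gradient φ p, γ⟫ := by
    by_contra hN
    push Not at hN
    have hN0 : 0 < ‖gradient φ p‖ := norm_pos_iff.2 (hne p hpU)
    have hv : ⟪gradient φ p, γ - gradient φ p⟫ < 0 := by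
      rw [inner_sub_right, real_inner_self_eq_norm_sq]; nlinarith
    obtain ⟨t, ht, ht0⟩ := ((hd.inwardAt hpU (mem_frontier_of_not_mem hΩo hp hpΩ) _ hv).and
      self_mem_nhdsWithin).exists
    have h6 := inner_lt_lam0 hΩo hγ hle ht
    rw [inner_add_right, inner_smul_right, inner_sub_right, real_inner_self_eq_norm_sq, hγ, hγp,
      real_inner_comm] at h6
    have : (0 : ℝ) < t := ht0
    nlinarith
  have hcont : ContinuousAt (fun y => ⟪gradient φ y, γ⟫) p :=
    (hd.continuousAt_gradient hpU).inner continuousAt_const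
  obtain ⟨r, hr, hball⟩ := Metric.mem_nhds_iff.1 (inter_mem (hU.mem_nhds hpU)
    (hcont.eventually (lt_mem_nhds hNγ)))
  have hreflim : Tendsto (fun k => planeRefl γ (μ (σ k)) (x (σ k))) atTop (𝓝 p) := by
    have := (continuous_planeRefl_prod γ).tendsto (lam0, p)
    have h7 := this.comp (hμσ.prodMk_nhds hlim)
    simpa [planeRefl_of_eq hγp, Function.comp_def] using h7
  obtain ⟨k, hk1, hk2⟩ := ((hlim.eventually (ball_mem_nhds p hr)).and
    (hreflim.eventually (ball_mem_nhds p hr))).exists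
  simp only [Function.comp] at hk1
  set X := x (σ k)
  set Y := planeRefl γ (μ (σ k)) X with hY
  have hXΩ : φ X < 0 := (hd.mem_iff (hball hk1).1).1 (h3 _)
  have hYΩ : 0 ≤ φ Y := not_lt.1 fun h => h5 (σ k) ((hd.mem_iff (hball hk2).1).2 h)
  have hmono : φ Y ≤ φ X := by
    have hder : ∀ z ∈ ball p r, HasFDerivWithinAt φ (fderiv ℝ φ z) (ball p r) z := fun z hz =>
      ((hd.contDiffAt (hball hz).1).differentiableAt (by norm_num)).hasFDerivAt.hasFDerivWithinAt
    obtain ⟨z, hz, hz2⟩ := domain_mvt hder (convex_ball p r) hk2 hk1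
    have hzb : z ∈ ball p r := (convex_ball p r).segment_subset hk2 hk1 hz
    have hXY : X - Y = (2 * (⟪γ, X⟫ - μ (σ k))) • γ := by
      rw [hY]; unfold planeRefl; module
    rw [hXY, map_smul, fderiv_eq_inner_gradient, smul_eq_mul] at hz2
    have h8 : 0 < ⟪gradient φ z, γ⟫ := (hball hzb).2
    have h9 := h4 (σ k)
    have : 0 < 2 * (⟪γ, X⟫ - μ (σ k)) * ⟪gradient φ z, γ⟫ := by
      apply mul_pos _ h8; linarith
    linarith
  linarith

/-- For every plane up to and including the critical position, the reflected cap lies in `Ω`. -/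
theorem cap_reflect (hΩo : IsOpen Ω) (hΩb : IsBounded Ω) (hΩ : IsC2Domain Ω)
    (hγ : ‖γ‖ = 1) (hle : ∀ x ∈ closure Ω, ⟪γ, x⟫ ≤ lam0)
    (hlamc : lamc = sInf {l : ℝ | l < lam0 ∧
      ∀ μ, l < μ → μ < lam0 → planeRefl γ μ '' planeCap Ω γ μ ⊆ Ω}) :
    ∀ μ, lamc ≤ μ → ∀ x ∈ Ω, μ < ⟪γ, x⟫ → planeRefl γ μ x ∈ Ω := by
  set S := {l : ℝ | l < lam0 ∧ ∀ μ, l < μ → μ < lam0 → planeRefl γ μ '' planeCap Ω γ μ ⊆ Ω}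
  obtain ⟨l₁, hl₁, hl₁'⟩ := exists_start hΩo hΩb hΩ hγ hle
  have hSne : S.Nonempty := ⟨l₁, hl₁, hl₁'⟩
  have hopen : ∀ μ, lamc < μ → ∀ x ∈ Ω, μ < ⟪γ, x⟫ → planeRefl γ μ x ∈ Ω := by
    intro μ hμ x hx hxμ
    rw [hlamc] at hμ
    obtain ⟨l, hl, hlμ⟩ := exists_lt_of_csInf_lt hSne hμ
    exact hl.2 μ hlμ (hxμ.trans (inner_lt_lam0 hΩo hγ hle hx)) ⟨x, ⟨hx, hxμ⟩, rfl⟩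
  intro μ hμ x hx hxμ
  rcases hμ.lt_or_eq with h | rfl
  · exact hopen μ h x hx hxμ
  -- the reflection in the critical plane is a reflection of a point moved along `γ` in a later one
  have h1 : ∀ᶠ t in 𝓝[>] (0 : ℝ), x + t • γ ∈ Ω := (tendsto_line x γ).eventually (hΩo.mem_nhds hx)
  obtain ⟨t, ht, ht0⟩ := (h1.and self_mem_nhdsWithin).exists
  have ht0' : (0 : ℝ) < t := ht0
  have h2 := hopen (lamc + t / 2) (by linarith) _ ht (by
    rw [inner_add_smul_self hγ]; linarith)
  have h3 : planeRefl γ (lamc + t / 2) (x + t • γ) = planeRefl γ lamc x := by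
    unfold planeRefl
    rw [inner_add_smul_self hγ]
    module
  rwa [h3] at h2

end Critical

/-! ### The moving-plane setting -/

/-- The data of the moving-plane argument: a bounded `C²` domain, a positive solution with its
first and second derivatives `G`, `H` up to the boundary, a Lipschitz constant `L` of `f₁` on the
range of `u`, and planes `T_μ`, `lamc ≤ μ`, whose reflected caps lie in `Ω`. -/
structure Setup {n : ℕ} (Ω : Set (EuclideanSpace ℝ (Fin n))) (γ : EuclideanSpace ℝ (Fin n))
    (u : EuclideanSpace ℝ (Fin n) → ℝ) (f₁ f₂ : ℝ → ℝ) (lamc lam0 L : ℝ)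
    (G : EuclideanSpace ℝ (Fin n) → EuclideanSpace ℝ (Fin n) →L[ℝ] ℝ)
    (H : EuclideanSpace ℝ (Fin n) →
      EuclideanSpace ℝ (Fin n) →L[ℝ] EuclideanSpace ℝ (Fin n) →L[ℝ] ℝ) : Prop where
  isOpen : IsOpen Ω
  compact : IsCompact (closure Ω)
  c2 : IsC2Domain Ω
  norm : ‖γ‖ = 1
  reg : Reg Ω u G H
  pos : ∀ x ∈ Ω, 0 < u x
  eq : ∀ x ∈ Ω, lap u x = -(f₁ (u x) + f₂ (u x))
  dir : ∀ x ∈ frontier Ω, u x = 0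
  mono : Monotone f₂
  L0 : 0 ≤ L
  lip : ∀ x ∈ closure Ω, ∀ y ∈ closure Ω, |f₁ (u x) - f₁ (u y)| ≤ L * |u x - u y|
  lt : lamc < lam0
  le : ∀ x ∈ closure Ω, ⟪γ, x⟫ ≤ lam0
  cap : ∀ μ, lamc ≤ μ → ∀ x ∈ Ω, μ < ⟪γ, x⟫ → planeRefl γ μ x ∈ Ω

/-! ### The reflected difference `u(x^λ) - u(x)` -/

/-- The difference `u(x^l) - u(x)` between the reflected function and `u`. -/
def wfun {n : ℕ} (u : EuclideanSpace ℝ (Fin n) → ℝ) (γ : EuclideanSpace ℝ (Fin n)) (l : ℝ)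
    (x : EuclideanSpace ℝ (Fin n)) : ℝ := u (planeRefl γ l x) - u x

/-- Strong maximum principle along a preconnected set. -/
theorem strong_max_connected {n : ℕ} {V C : Set (EuclideanSpace ℝ (Fin n))} (hV : IsOpen V)
    {L : ℝ} (hL : 0 ≤ L) {w : EuclideanSpace ℝ (Fin n) → ℝ} (hw2 : ∀ x ∈ V, ContDiffAt ℝ 2 w x)
    (hlw : ∀ x ∈ V, lap w x ≤ L * w x) (hw0 : ∀ x ∈ V, 0 ≤ w x) (hC : IsPreconnected C)
    (hCV : C ⊆ V) {x₀ : EuclideanSpace ℝ (Fin n)} (hx₀ : x₀ ∈ C) (h0 : w x₀ = 0) :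
    ∀ x ∈ C, w x = 0 := by
  have hA : IsOpen {x | ∀ᶠ y in 𝓝 x, w y = 0} := isOpen_setOfPred_eventually_nhds
  have hB : IsOpen {x ∈ V | w x ≠ 0} := by
    have hc : ContinuousOn w V := fun x hx => (hw2 x hx).continuousAt.continuousWithinAt
    exact hc.isOpen_inter_preimage hV isOpen_ne
  have hdisj : Disjoint {x | ∀ᶠ y in 𝓝 x, w y = 0} {x ∈ V | w x ≠ 0} := by
    rw [Set.disjoint_left]
    intro x hx hx'
    exact hx'.2 hx.self_of_nhds
  have hcov : C ⊆ {x | ∀ᶠ y in 𝓝 x, w y = 0} ∪ {x ∈ V | w x ≠ 0} := by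
    intro x hx
    by_cases hwx : w x = 0
    · exact Or.inl (strong_max hV hL hw2 hlw hw0 (hCV hx) hwx)
    · exact Or.inr ⟨hCV hx, hwx⟩
  have := hC.subset_left_of_subset_union hA hB hdisj hcov
    ⟨x₀, hx₀, strong_max hV hL hw2 hlw hw0 (hCV hx₀) h0⟩
  exact fun x hx => (this hx).self_of_nhds

/-- A closed ball resting on a hyperplane meets it only at the point of contact. -/
theorem inner_lt_of_dist_le {n : ℕ} {γ x y : EuclideanSpace ℝ (Fin n)} (hγ : ‖γ‖ = 1) {R : ℝ}
    (hR : 0 < R) (hy : dist y (x + R • γ) ≤ R) (hne : y ≠ x) : ⟪γ, x⟫ < ⟪γ, y⟫ := by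
  by_contra! hcon
  apply hne
  have h1 : ‖y - x - R • γ‖ ≤ R := by
    rw [dist_eq_norm] at hy
    rwa [← sub_sub] at hy
  have h2 : ‖y - x - R • γ‖ ^ 2 = ‖y - x‖ ^ 2 - 2 * (R * (⟪γ, y⟫ - ⟪γ, x⟫)) + R ^ 2 := by
    rw [norm_sub_sq_real, inner_smul_right, norm_smul, hγ, real_inner_comm, inner_sub_right,
      mul_one, Real.norm_eq_abs, sq_abs]
  have h3 : ‖y - x - R • γ‖ ^ 2 ≤ R ^ 2 := by gcongr
  have h4 : R * (⟪γ, y⟫ - ⟪γ, x⟫) ≤ 0 := mul_nonpos_of_nonneg_of_nonpos hR.le (by linarith)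
  have h5 : ‖y - x‖ ^ 2 ≤ 0 := by linarith
  have h6 : ‖y - x‖ = 0 := by nlinarith [norm_nonneg (y - x)]
  exact sub_eq_zero.1 (norm_eq_zero.1 h6)

namespace Setup

variable {n : ℕ} {Ω : Set (EuclideanSpace ℝ (Fin n))} {γ : EuclideanSpace ℝ (Fin n)}
  {u : EuclideanSpace ℝ (Fin n) → ℝ} {f₁ f₂ : ℝ → ℝ} {lamc lam0 L : ℝ}
  {G : EuclideanSpace ℝ (Fin n) → EuclideanSpace ℝ (Fin n) →L[ℝ] ℝ}
  {H : EuclideanSpace ℝ (Fin n) →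
      EuclideanSpace ℝ (Fin n) →L[ℝ] EuclideanSpace ℝ (Fin n) →L[ℝ] ℝ}

theorem nonneg (S : Setup Ω γ u f₁ f₂ lamc lam0 L G H) {x : EuclideanSpace ℝ (Fin n)}
    (hx : x ∈ closure Ω) : 0 ≤ u x := by
  by_cases h : x ∈ Ω
  · exact (S.pos x h).le
  · exact (S.dir x (mem_frontier_of_not_mem S.isOpen hx h)).ge

theorem sub_eq_refl (γ x : EuclideanSpace ℝ (Fin n))
    (t : ℝ) : planeRefl γ (⟪γ, x⟫ - t / 2) x = x - t • γ := by
  unfold planeRefl; module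

theorem sub_mem (S : Setup Ω γ u f₁ f₂ lamc lam0 L G H) {x : EuclideanSpace ℝ (Fin n)}
    (hx : x ∈ Ω) {t : ℝ} (ht : 0 ≤ t) (ht' : t ≤ 2 * (⟪γ, x⟫ - lamc)) : x - t • γ ∈ Ω := by
  rcases ht.eq_or_lt with rfl | h
  · simpa using hx
  · rw [← sub_eq_refl]
    exact S.cap _ (by linarith) x hx (by linarith)

theorem refl_mem_closure (S : Setup Ω γ u f₁ f₂ lamc lam0 L G H) {x : EuclideanSpace ℝ (Fin n)}
    (hx : x ∈ closure Ω) {l : ℝ} (hl : lamc ≤ l) (hxl : l ≤ ⟪γ, x⟫) :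
    planeRefl γ l x ∈ closure Ω := by
  rcases hxl.eq_or_lt with h | h
  · rwa [planeRefl_of_eq h.symm]
  · have ho : IsOpen {y : EuclideanSpace ℝ (Fin n) | l < ⟪γ, y⟫} :=
      isOpen_lt continuous_const (by fun_prop)
    have h1 : x ∈ closure ({y : EuclideanSpace ℝ (Fin n) | l < ⟪γ, y⟫} ∩ Ω) :=
      ho.inter_closure ⟨h, hx⟩
    exact map_mem_closure (continuous_planeRefl γ l) h1 (fun y hy => S.cap l hl y hy.2 hy.1)

theorem sub_mem_closure (S : Setup Ω γ u f₁ f₂ lamc lam0 L G H) {x : EuclideanSpace ℝ (Fin n)}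
    (hx : x ∈ closure Ω) {t : ℝ} (ht : 0 ≤ t) (ht' : t ≤ 2 * (⟪γ, x⟫ - lamc)) :
    x - t • γ ∈ closure Ω := by
  rw [← sub_eq_refl]
  exact S.refl_mem_closure hx (by linarith) (by linarith)

theorem w_contDiffAt (S : Setup Ω γ u f₁ f₂ lamc lam0 L G H) {x : EuclideanSpace ℝ (Fin n)}
    {l : ℝ} (hx : x ∈ Ω) (hx' : planeRefl γ l x ∈ Ω) : ContDiffAt ℝ 2 (wfun u γ l) x := by
  have h1 : ContDiffAt ℝ 2 (fun y => u (planeRefl γ l y)) x :=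
    (S.reg.contDiffAt _ hx').comp x (contDiff_planeRefl γ l).contDiffAt
  exact h1.sub (S.reg.contDiffAt _ hx)

theorem w_lap (S : Setup Ω γ u f₁ f₂ lamc lam0 L G H) {x : EuclideanSpace ℝ (Fin n)}
    {l : ℝ} (hx : x ∈ Ω) (hx' : planeRefl γ l x ∈ Ω) (hw : 0 ≤ wfun u γ l x) :
    lap (wfun u γ l) x ≤ L * wfun u γ l x := by
  have h1 : ContDiffAt ℝ 2 (fun y => u (planeRefl γ l y)) x :=
    (S.reg.contDiffAt _ hx').comp x (contDiff_planeRefl γ l).contDiffAt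
  have h2 : lap (wfun u γ l) x = lap (fun y => u (planeRefl γ l y)) x - lap u x :=
    lap_sub h1 (S.reg.contDiffAt _ hx)
  rw [h2, lap_planeRefl S.norm l (S.reg.contDiffAt _ hx'), S.eq _ hx, S.eq _ hx']
  have h3 := S.lip _ (subset_closure hx') _ (subset_closure hx)
  unfold wfun at hw ⊢
  rw [abs_of_nonneg hw] at h3
  have h4 := S.mono (sub_nonneg.1 hw)
  have h5 := (abs_le.1 h3).1
  linarith

theorem w_cont (S : Setup Ω γ u f₁ f₂ lamc lam0 L G H) {l : ℝ} (hl : lamc ≤ l) :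
    ContinuousOn (wfun u γ l) {x | x ∈ closure Ω ∧ l ≤ ⟪γ, x⟫} := by
  apply ContinuousOn.sub
  · exact S.reg.cu.comp (continuous_planeRefl γ l).continuousOn
      (fun x hx => S.refl_mem_closure hx.1 hl hx.2)
  · exact S.reg.cu.mono (fun x hx => hx.1)

/-- Hopf's lemma on the plane: if `u(x^l) > u(x)` in the open cap, then `∂_γ u < 0` on
`Ω ∩ T_l`. -/
theorem neg_on_plane (S : Setup Ω γ u f₁ f₂ lamc lam0 L G H) {l : ℝ} (hl : lamc ≤ l)
    {x : EuclideanSpace ℝ (Fin n)} (hx : x ∈ Ω) (hxl : ⟪γ, x⟫ = l)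
    (hA : ∀ᶠ y in 𝓝 x, l < ⟪γ, y⟫ → 0 < wfun u γ l y) : G x γ < 0 := by
  obtain ⟨r, hr, hball⟩ := Metric.mem_nhds_iff.1 (inter_mem (S.isOpen.mem_nhds hx) hA)
  set R := r / 4 with hRdef
  have hR : 0 < R := by positivity
  set c := x + R • γ with hc
  have hdist : dist x c = R := by
    rw [hc, dist_self_add_right, norm_smul, S.norm, Real.norm_eq_abs, abs_of_pos hR, mul_one]
  have hsub : ∀ y ∈ closedBall c R, y ∈ ball x r := by
    intro y hy
    rw [mem_ball]
    have := dist_triangle y c x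
    rw [dist_comm c x, hdist] at this
    have h2 : dist y c ≤ R := hy
    linarith
  have hrefl : ∀ y ∈ closedBall c R, planeRefl γ l y ∈ Ω := by
    intro y hy
    by_cases hyx : y = x
    · rw [hyx, planeRefl_of_eq hxl]; exact hx
    · exact S.cap l hl y (hball (hsub y hy)).1 (hxl ▸ inner_lt_of_dist_le S.norm hR hy hyx)
  have hpos : ∀ y ∈ closedBall c R, y ≠ x → 0 < wfun u γ l y := fun y hy hyx =>
    (hball (hsub y hy)).2 (hxl ▸ inner_lt_of_dist_le S.norm hR hy hyx)
  have hwx : wfun u γ l x = 0 := by simp [wfun, planeRefl_of_eq hxl]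
  obtain ⟨κ, hκ, hκt⟩ := hopf hR S.L0 hdist
    (fun y hy => (S.w_contDiffAt (hball (hsub y hy)).1
      (hrefl y hy)).continuousAt.continuousWithinAt) hwx.ge hpos
    (fun y hy => by
      have hy' := ball_subset_closedBall hy
      refine ⟨S.w_contDiffAt (hball (hsub y hy')).1 (hrefl y hy'),
        S.w_lap (hball (hsub y hy')).1 (hrefl y hy') (hpos y hy' ?_).le⟩
      rintro rfl
      rw [mem_ball, hdist] at hy; exact lt_irrefl _ hy)
  have hcx : c - x = R • γ := by rw [hc]; simp
  have hfun : ∀ t : ℝ, wfun u γ l (x + t • (c - x)) = u (x + t • (-(R • γ))) - u (x + t • (R • γ)) := by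
    intro t
    rw [hcx]
    unfold wfun
    congr 2
    unfold planeRefl
    rw [smul_smul, inner_add_smul_self S.norm, hxl]
    module
  have hder : HasDerivWithinAt (fun t : ℝ => wfun u γ l (x + t • (c - x)))
      (-2 * R * G x γ) (Ioi 0) 0 := by
    rw [funext hfun]
    have h1 := S.reg.hasDerivAt_line (x := x) (v := -(R • γ)) (t := 0) (by simpa using hx)
    have h2 := S.reg.hasDerivAt_line (x := x) (v := R • γ) (t := 0) (by simpa using hx)
    refine ((h1.sub h2).hasDerivWithinAt).congr_deriv ?_
    simp
    ring
  have := le_of_hasDerivWithinAt_of_le hder (κ := κ) (by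
    filter_upwards [Ioo_mem_nhdsGT (show (0 : ℝ) < 1 / 2 by norm_num)] with t ht
    have h3 := hκt t ⟨ht.1.le, ht.2.le⟩
    simpa [hwx] using h3)
  nlinarith

/-- Beyond the critical position, `u(x^l) ≥ u(x)` in the cap improves to a strict inequality: a
zero would propagate along `γ` up to the boundary, where `u(x^l) > 0 = u(x)`. -/
theorem strict (S : Setup Ω γ u f₁ f₂ lamc lam0 L G H) {l : ℝ} (hl : lamc < l)
    (hw : ∀ x ∈ Ω, l < ⟪γ, x⟫ → 0 ≤ wfun u γ l x) :
    ∀ x ∈ Ω, l < ⟪γ, x⟫ → 0 < wfun u γ l x := by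
  intro x hx hxl
  refine (hw x hx hxl).lt_of_ne' fun h0 => ?_
  have hout : x + (lam0 - ⟪γ, x⟫) • γ ∉ Ω := fun h => by
    have := inner_lt_lam0 S.isOpen S.norm S.le h
    rw [inner_add_smul_self S.norm] at this
    linarith
  obtain ⟨t, ht0, -, hyf, hin⟩ := exists_exit S.isOpen hx
    (sub_nonneg.2 (S.le x (subset_closure hx))) hout
  set y := x + t • γ with hy
  have hyl : l < ⟪γ, y⟫ := by rw [hy, inner_add_smul_self S.norm]; linarith
  have hVo' : IsOpen {z : EuclideanSpace ℝ (Fin n) | l < ⟪γ, z⟫} :=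
    isOpen_lt continuous_const (by fun_prop)
  have hVo : IsOpen {z | z ∈ Ω ∧ l < ⟪γ, z⟫} := S.isOpen.inter hVo'
  have hseg : ∀ r ∈ Ico 0 t, wfun u γ l (x + r • γ) = 0 := by
    have := strong_max_connected (w := wfun u γ l) (C := (fun r : ℝ => x + r • γ) '' Ico 0 t) hVo
      S.L0
      (fun z hz => S.w_contDiffAt hz.1 (S.cap l hl.le z hz.1 hz.2))
      (fun z hz => S.w_lap hz.1 (S.cap l hl.le z hz.1 hz.2) (hw z hz.1 hz.2))
      (fun z hz => hw z hz.1 hz.2)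
      (isPreconnected_Ico.image _ (by fun_prop))
      (by
        rintro _ ⟨r, hr, rfl⟩
        refine ⟨hin r hr.1 hr.2, ?_⟩
        rw [inner_add_smul_self S.norm]; linarith [hr.1])
      (x₀ := x) ⟨0, ⟨le_rfl, ht0⟩, by simp⟩ h0
    exact fun r hr => this _ ⟨r, hr, rfl⟩
  have hyc : y ∈ closure Ω := frontier_subset_closure hyf
  have hlim : Tendsto (fun r : ℝ => x + r • γ) (𝓝[<] t) (𝓝[{z | z ∈ closure Ω ∧ l ≤ ⟪γ, z⟫}] y) := by
    apply tendsto_nhdsWithin_iff.2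
    constructor
    · have hc : Continuous fun r : ℝ => x + r • γ := by fun_prop
      exact (hc.tendsto t).mono_left nhdsWithin_le_nhds
    · filter_upwards [Ioo_mem_nhdsLT ht0] with r hr
      refine ⟨subset_closure (hin r hr.1.le hr.2), ?_⟩
      rw [inner_add_smul_self S.norm]; linarith [hr.1]
  have hwy : wfun u γ l y = 0 := by
    have h1 := ((S.w_cont hl.le) y ⟨hyc, hyl.le⟩).tendsto.comp hlim
    refine tendsto_nhds_unique h1 (tendsto_const_nhds.congr' ?_)
    filter_upwards [Ioo_mem_nhdsLT ht0] with r hr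
    exact (hseg r ⟨hr.1.le, hr.2⟩).symm
  have hs : ∃ s > 0, s ≤ 2 * (l - lamc) ∧ s < t := by
    refine ⟨min (2 * (l - lamc)) (t / 2), lt_min (by linarith) (by linarith), min_le_left _ _, ?_⟩
    exact (min_le_right _ _).trans_lt (by linarith)
  obtain ⟨s, hs0, hs1, hs2⟩ := hs
  have h5 := S.cap (l - s / 2) (by linarith) _ (hin (t - s) (by linarith) (by linarith)) (by
    rw [inner_add_smul_self S.norm]; linarith)
  have h6 : planeRefl γ (l - s / 2) (x + (t - s) • γ) = planeRefl γ l y := by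
    unfold planeRefl
    rw [hy, inner_add_smul_self S.norm, inner_add_smul_self S.norm]
    module
  rw [h6] at h5
  have h7 := S.pos _ h5
  unfold wfun at hwy
  rw [S.dir y hyf] at hwy
  linarith

theorem G_inward (S : Setup Ω γ u f₁ f₂ lamc lam0 L G H) {q v : EuclideanSpace ℝ (Fin n)}
    (hq : q ∈ frontier Ω) (hv : ∀ᶠ t in 𝓝[>] (0 : ℝ), q + t • v ∈ closure Ω) : 0 ≤ G q v := by
  have h1 := hasDerivWithinAt_ray (S.reg.dG q (frontier_subset_closure hq)) hv
  refine le_of_hasDerivWithinAt_of_le h1 ?_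
  filter_upwards [hv] with t ht
  simp only [zero_mul, zero_smul, add_zero, S.dir q hq, sub_zero]
  exact S.nonneg ht

/-- The gradient of `u` at a boundary point is normal to the boundary. -/
theorem G_tangent (S : Setup Ω γ u f₁ f₂ lamc lam0 L G H) {q ν τ : EuclideanSpace ℝ (Fin n)}
    (hq : q ∈ frontier Ω) (hν : InwardAt Ω q ν) (hν0 : ν ≠ 0) (hτ : ⟪ν, τ⟫ = 0) : G q τ = 0 := by
  have key : ∀ τ, ⟪ν, τ⟫ = 0 → 0 ≤ G q τ := by
    intro τ hτ
    apply le_of_forall_pos_le_add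
    intro ε hε
    have hs : 0 < ε / (|G q ν| + 1) := by positivity
    have hν1 : 0 < ‖ν‖ := norm_pos_iff.2 hν0
    have h1 := S.G_inward hq ((hν (τ - (ε / (|G q ν| + 1)) • ν) (by
      rw [inner_sub_right, hτ, inner_smul_right, real_inner_self_eq_norm_sq]
      have : 0 < ε / (|G q ν| + 1) * ‖ν‖ ^ 2 := by positivity
      linarith)).mono fun t ht => subset_closure ht)
    rw [map_sub, map_smul, smul_eq_mul] at h1
    have h2 : -(ε / (|G q ν| + 1) * G q ν) ≤ ε := by
      have h3 : ε / (|G q ν| + 1) * (|G q ν| + 1) = ε := by field_simp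
      have h4 := neg_abs_le (G q ν)
      nlinarith
    linarith
  have h1 := key τ hτ
  have h2 := key (-τ) (by rw [inner_neg_right, hτ, neg_zero])
  rw [map_neg] at h2
  linarith

theorem eventually_sub_mem (S : Setup Ω γ u f₁ f₂ lamc lam0 L G H)
    {Q : EuclideanSpace ℝ (Fin n)} (hQ : Q ∈ closure Ω) (hl : lamc < ⟪γ, Q⟫) :
    ∀ᶠ t in 𝓝[>] (0 : ℝ), Q + t • (-γ) ∈ closure Ω := by
  filter_upwards [Ioo_mem_nhdsGT (show 0 < 2 * (⟪γ, Q⟫ - lamc) by linarith)] with t ht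
  have := S.sub_mem_closure hQ ht.1.le ht.2.le
  rwa [smul_neg, ← sub_eq_add_neg]

theorem G_bdry_nonpos (S : Setup Ω γ u f₁ f₂ lamc lam0 L G H) {Q : EuclideanSpace ℝ (Fin n)}
    (hQ : Q ∈ frontier Ω) (hl : lamc < ⟪γ, Q⟫) : G Q γ ≤ 0 := by
  have := S.G_inward hQ (S.eventually_sub_mem (frontier_subset_closure hQ) hl)
  rw [map_neg] at this
  linarith

theorem normal_nonneg (S : Setup Ω γ u f₁ f₂ lamc lam0 L G H) {Q ν : EuclideanSpace ℝ (Fin n)}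
    (hν : BdryNormal Ω Q ν) (hl : lamc < ⟪γ, Q⟫) : 0 ≤ ⟪ν, γ⟫ := by
  by_contra! h
  obtain ⟨t, h1, h2⟩ := ((S.eventually_sub_mem (frontier_subset_closure hν.mem) hl).and
    (hν.outward (-γ) (by rw [inner_neg_right]; linarith))).exists
  exact h2 h1

end Setup

/-! ### Behaviour of the gradient at boundary points -/

/-- One-sided second-order expansion: quadratic growth of `m` at `0` bounds the right derivative
of `m'` from below. -/
theorem second_order {m m₁ : ℝ → ℝ} {m₂ κ : ℝ}
    (h1 : ∀ᶠ t in 𝓝[>] (0 : ℝ), HasDerivAt m (m₁ t) t)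
    (hc : ContinuousWithinAt m (Ioi 0) 0) (h0 : m₁ 0 = 0)
    (h2 : HasDerivWithinAt m₁ m₂ (Ioi 0) 0)
    (hκ : ∀ᶠ t in 𝓝[>] (0 : ℝ), κ * t ^ 2 ≤ m t - m 0) : 2 * κ ≤ m₂ := by
  by_contra! hlt
  have hlim := (hasDerivWithinAt_iff_tendsto_slope' (by simp)).1 h2
  have h3 : ∀ᶠ t in 𝓝[>] (0 : ℝ), m₁ t < 2 * κ * t := by
    filter_upwards [hlim.eventually (gt_mem_nhds hlt), self_mem_nhdsWithin] with t ht ht0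
    rw [slope_def_field, sub_zero, h0, sub_zero, div_lt_iff₀ ht0] at ht
    exact ht
  obtain ⟨δ, hδ, hsub⟩ := mem_nhdsGT_iff_exists_Ioc_subset.1 (h1.and (h3.and hκ))
  have hδ0 : (0 : ℝ) < δ := hδ
  have hd : ∀ t ∈ Ioc 0 δ, HasDerivAt (fun t => m t - κ * t ^ 2) (m₁ t - 2 * κ * t) t := by
    intro t ht
    refine ((hsub ht).1.sub (((hasDerivAt_id t).pow 2).const_mul κ)).congr_deriv ?_
    simp; ring
  have hanti : StrictAntiOn (fun t => m t - κ * t ^ 2) (Icc 0 δ) := by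
    apply strictAntiOn_of_deriv_neg (convex_Icc _ _)
    · intro t ht
      rcases ht.1.eq_or_lt with h | h
      · subst h
        have h4 : ContinuousWithinAt m (Ici 0) 0 := continuousWithinAt_Ioi_iff_Ici.1 hc
        exact (h4.mono Icc_subset_Ici_self).sub (by fun_prop)
      · exact (hd t ⟨h, ht.2⟩).continuousAt.continuousWithinAt
    · intro t ht
      rw [interior_Icc] at ht
      rw [(hd t ⟨ht.1, ht.2.le⟩).deriv]
      linarith [(hsub ⟨ht.1, ht.2.le⟩).2.1]
  have h5 := hanti (left_mem_Icc.2 hδ0.le) (right_mem_Icc.2 hδ0.le) hδ0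
  have h6 := (hsub (right_mem_Ioc.2 hδ0)).2.2
  simp only at h5
  linarith

theorem tendsto_clm_apply {α E F : Type*} [NormedAddCommGroup E] [NormedSpace ℝ E]
    [NormedAddCommGroup F] [NormedSpace ℝ F] {l : Filter α} {A : α → E →L[ℝ] F} {A₀ : E →L[ℝ] F}
    {e : α → E} {e₀ : E} (hA : Tendsto A l (𝓝 A₀)) (he : Tendsto e l (𝓝 e₀)) :
    Tendsto (fun a => A a (e a)) l (𝓝 (A₀ e₀)) :=
  (isBoundedBilinearMap_apply.continuous.tendsto (A₀, e₀)).comp (hA.prodMk_nhds he)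

theorem Reg.ray_G {n : ℕ} {Ω : Set (EuclideanSpace ℝ (Fin n))}
    {u : EuclideanSpace ℝ (Fin n) → ℝ}
    {G : EuclideanSpace ℝ (Fin n) → EuclideanSpace ℝ (Fin n) →L[ℝ] ℝ}
    {H : EuclideanSpace ℝ (Fin n) →
      EuclideanSpace ℝ (Fin n) →L[ℝ] EuclideanSpace ℝ (Fin n) →L[ℝ] ℝ}
    (h : Reg Ω u G H) {x v : EuclideanSpace ℝ (Fin n)} (e : EuclideanSpace ℝ (Fin n))
    (hx : x ∈ closure Ω) (hv : ∀ᶠ t in 𝓝[>] (0 : ℝ), x + t • v ∈ closure Ω) :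
    HasDerivWithinAt (fun t : ℝ => G (x + t • v) e) (H x v e) (Ioi 0) 0 := by
  have h1 := hasDerivWithinAt_ray (h.dH x hx) hv
  exact (ContinuousLinearMap.apply ℝ ℝ e).hasFDerivAt.comp_hasDerivWithinAt 0 h1

namespace Setup

variable {n : ℕ} {Ω : Set (EuclideanSpace ℝ (Fin n))} {γ : EuclideanSpace ℝ (Fin n)}
  {u : EuclideanSpace ℝ (Fin n) → ℝ} {f₁ f₂ : ℝ → ℝ} {lamc lam0 L : ℝ}
  {G : EuclideanSpace ℝ (Fin n) → EuclideanSpace ℝ (Fin n) →L[ℝ] ℝ}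
  {H : EuclideanSpace ℝ (Fin n) →
      EuclideanSpace ℝ (Fin n) →L[ℝ] EuclideanSpace ℝ (Fin n) →L[ℝ] ℝ}

theorem ne_zero_of_normal {Q ν : EuclideanSpace ℝ (Fin n)} (hν : BdryNormal Ω Q ν) : ν ≠ 0 := by
  rintro rfl
  have := hν.norm
  simp at this

theorem G_eq_normal (S : Setup Ω γ u f₁ f₂ lamc lam0 L G H) {Q ν : EuclideanSpace ℝ (Fin n)}
    (hν : BdryNormal Ω Q ν) (v : EuclideanSpace ℝ (Fin n)) : G Q v = ⟪ν, v⟫ * G Q ν := by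
  have h1 := S.G_tangent (τ := v - ⟪ν, v⟫ • ν) hν.mem hν.inward (ne_zero_of_normal hν) (by
    rw [inner_sub_right, inner_smul_right, real_inner_self_eq_norm_sq, hν.norm]; ring)
  rw [map_sub, map_smul, smul_eq_mul] at h1
  linarith

/-- If the trace of the second derivative is non-positive at some boundary point, then
`Δu ≤ L u` on all of `Ω`, because `f₂` is monotone. -/
theorem lap_le_of_trace (S : Setup Ω γ u f₁ f₂ lamc lam0 L G H) {Q : EuclideanSpace ℝ (Fin n)}
    (hQ : Q ∈ frontier Ω) (b : OrthonormalBasis (Fin n) ℝ (EuclideanSpace ℝ (Fin n)))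
    (hT : ∑ i, H Q (b i) (b i) ≤ 0) : ∀ y ∈ Ω, lap u y ≤ L * u y := by
  intro y hy
  have hQc := frontier_subset_closure hQ
  have : (𝓝[Ω] Q).NeBot := mem_closure_iff_nhdsWithin_neBot.1 hQc
  have hu0 := S.dir Q hQ
  have hlimu : Tendsto u (𝓝[Ω] Q) (𝓝 0) := by
    rw [← hu0]; exact (S.reg.cu Q hQc).tendsto.mono_left (nhdsWithin_mono _ subset_closure)
  have hlimT : Tendsto (fun x => ∑ i, H x (b i) (b i)) (𝓝[Ω] Q) (𝓝 (∑ i, H Q (b i) (b i))) := by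
    apply tendsto_finsetSum
    intro i _
    have h1 : Tendsto H (𝓝[Ω] Q) (𝓝 (H Q)) :=
      (S.reg.cH Q hQc).tendsto.mono_left (nhdsWithin_mono _ subset_closure)
    exact tendsto_clm_apply (tendsto_clm_apply h1 tendsto_const_nhds) tendsto_const_nhds
  have hlow : ∀ᶠ x in 𝓝[Ω] Q, -(f₁ 0) - L * u x - (∑ i, H x (b i) (b i)) ≤ f₂ (u y) := by
    filter_upwards [hlimu.eventually (gt_mem_nhds (S.pos y hy)), self_mem_nhdsWithin] with x hx hxΩ
    have h1 := S.eq x hxΩ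
    rw [S.reg.lap_eq hxΩ b] at h1
    have h2 := S.mono hx.le
    have h3 := S.lip x (subset_closure hxΩ) Q hQc
    rw [hu0, sub_zero, abs_of_pos (S.pos x hxΩ)] at h3
    have h4 := (abs_le.1 h3).2
    linarith
  have hlim : Tendsto (fun x => -(f₁ 0) - L * u x - (∑ i, H x (b i) (b i))) (𝓝[Ω] Q)
      (𝓝 (-(f₁ 0) - L * 0 - (∑ i, H Q (b i) (b i)))) :=
    (tendsto_const_nhds.sub (tendsto_const_nhds.mul hlimu)).sub hlimT
  have h5 := le_of_tendsto hlim hlow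
  rw [S.eq y hy]
  have h3 := S.lip y (subset_closure hy) Q hQc
  rw [hu0, sub_zero, abs_of_pos (S.pos y hy)] at h3
  have h4 := (abs_le.1 h3).1
  linarith

/-- At a boundary point whose normal is not orthogonal to `γ`, either `∂_γ u < 0` or
`∂_ν ∂_γ u > 0`. If the second derivative at the point has non-positive trace, Hopf's lemma for `u`
gives the first alternative. If the trace is positive and the gradient vanishes at the point, the
second derivative is a positive multiple of `ν ⊗ ν`. -/
theorem bdry_transversal (S : Setup Ω γ u f₁ f₂ lamc lam0 L G H)
    {Q ν : EuclideanSpace ℝ (Fin n)} (hν : BdryNormal Ω Q ν) (hνγ : 0 < ⟪ν, γ⟫) :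
    G Q γ < 0 ∨ 0 < H Q ν γ := by
  have hQc := frontier_subset_closure hν.mem
  have hin : ∀ v, ⟪ν, v⟫ < 0 → ∀ᶠ t in 𝓝[>] (0 : ℝ), Q + t • v ∈ closure Ω := fun v hv =>
    (hν.inward v hv).mono fun t ht => subset_closure ht
  have hνν : ⟪ν, ν⟫ = 1 := by rw [real_inner_self_eq_norm_sq, hν.norm]; norm_num
  have hGν : G Q ν ≤ 0 := by
    have := S.G_inward hν.mem (hin (-ν) (by rw [inner_neg_right, hνν]; norm_num))
    rw [map_neg] at this
    linarith
  set b := EuclideanSpace.basisFun (Fin n) ℝ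
  by_cases hT : ∑ i, H Q (b i) (b i) ≤ 0
  · left
    have hlap := S.lap_le_of_trace hν.mem b hT
    obtain ⟨R, hR, hball⟩ := hν.ball
    have hdist : dist Q (Q - R • ν) = R := by
      rw [dist_eq_norm, sub_sub_cancel, norm_smul, hν.norm, Real.norm_eq_abs, abs_of_pos hR,
        mul_one]
    have hmem : ∀ x ∈ ball (Q - R • ν) R, x ∈ Ω := fun x hx => hball x (mem_ball.1 hx).le (by
      rintro rfl; rw [mem_ball, hdist] at hx; exact lt_irrefl _ hx)
    obtain ⟨κ, hκ, hκt⟩ := hopf (w := u) hR S.L0 hdist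
      (S.reg.cu.mono (fun x hx => by
        by_cases hxQ : x = Q
        · rwa [hxQ]
        · exact subset_closure (hball x hx hxQ)))
      (S.dir Q hν.mem).ge (fun x hx hxQ => S.pos x (hball x hx hxQ))
      (fun x hx => ⟨S.reg.contDiffAt x (hmem x hx), hlap x (hmem x hx)⟩)
    have hdir : Q - R • ν - Q = -(R • ν) := by abel
    rw [hdir] at hκt
    have hder := hasDerivWithinAt_ray (S.reg.dG Q hQc) (hin (-(R • ν)) (by
      rw [inner_neg_right, inner_smul_right, hνν]; linarith))
    have h1 := le_of_hasDerivWithinAt_of_le hder (κ := κ) (by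
      filter_upwards [Ioo_mem_nhdsGT (show (0 : ℝ) < 1 / 2 by norm_num)] with t ht
      have h3 := hκt t ⟨ht.1.le, ht.2.le⟩
      simpa [S.dir Q hν.mem] using h3)
    rw [map_neg, map_smul, smul_eq_mul] at h1
    have h2 : G Q ν < 0 := by nlinarith
    rw [S.G_eq_normal hν]
    exact mul_neg_of_pos_of_neg hνγ h2
  · push Not at hT
    rcases hGν.lt_or_eq with h | h
    · left
      rw [S.G_eq_normal hν]
      exact mul_neg_of_pos_of_neg hνγ h
    right
    have hG0 : ∀ v, G Q v = 0 := fun v => by rw [S.G_eq_normal hν, h, mul_zero]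
    have hττ : ∀ τ, ⟪ν, τ⟫ = 0 → H Q τ τ = 0 := by
      intro τ hτ
      obtain ⟨d, c, τ', ν', hd, hcd, hτ', hev⟩ := hν.tangent τ hτ
      have h1 := (S.reg.dH Q hQc).lim hd
        (hev.mono fun k hk => frontier_subset_closure hk.1) hcd
      have h2 := tendsto_clm_apply h1 hτ'
      refine tendsto_nhds_unique h2 (tendsto_const_nhds.congr' ?_)
      filter_upwards [hev] with k hk
      have h3 := S.G_tangent hk.1 hk.2.2.2 hk.2.1 hk.2.2.1
      simp [h3, hG0]
    have hpsd : ∀ v, ⟪ν, v⟫ < 0 → 0 ≤ H Q v v := by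
      intro v hv
      have h1 := second_order (m := fun t => u (Q + t • v)) (m₁ := fun t => G (Q + t • v) v)
        (m₂ := H Q v v) (κ := 0)
        ((hν.inward v hv).mono fun t ht => S.reg.hasDerivAt_line ht)
        (hasDerivWithinAt_ray (S.reg.dG Q hQc) (hin v hv)).continuousWithinAt
        (by simp [hG0]) (S.reg.ray_G v hQc (hin v hv))
        ((hin v hv).mono fun t ht => by
          simpa [S.dir Q hν.mem] using S.nonneg ht)
      linarith
    have hsymm := S.reg.symm Q hQc
    have hντ : ∀ τ, ⟪ν, τ⟫ = 0 → H Q ν τ = 0 := by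
      intro τ hτ
      have h1 : ∀ s : ℝ, 0 ≤ H Q ν ν - 2 * s * H Q ν τ := by
        intro s
        have h2 := hpsd (-ν + s • τ) (by
          rw [inner_add_right, inner_neg_right, inner_smul_right, hνν, hτ]; norm_num)
        simp only [map_add, map_neg, map_smul, add_apply,
          neg_apply, smul_apply, smul_eq_mul,
          hττ τ hτ, hsymm τ ν] at h2
        linarith
      by_contra hne
      have h3 := h1 ((H Q ν ν + 1) / (2 * H Q ν τ))
      have h4 : 2 * ((H Q ν ν + 1) / (2 * H Q ν τ)) * H Q ν τ = H Q ν ν + 1 := by field_simp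
      linarith
    have hdec : ∀ v, ⟪ν, v - ⟪ν, v⟫ • ν⟫ = 0 := fun v => by
      rw [inner_sub_right, inner_smul_right, hνν]; ring
    have hνv : ∀ v, H Q ν v = ⟪ν, v⟫ * H Q ν ν := by
      intro v
      have h1 := hντ _ (hdec v)
      rw [map_sub, map_smul, smul_eq_mul] at h1
      linarith
    have hvv : ∀ v, H Q v v = ⟪ν, v⟫ ^ 2 * H Q ν ν := by
      intro v
      have h1 := hττ _ (hdec v)
      simp only [map_sub, map_smul, sub_apply,
          smul_apply, smul_eq_mul, hsymm v ν, hνv v] at h1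
      linarith
    have htr : ∑ i, H Q (b i) (b i) = H Q ν ν := by
      have h1 : ∑ i, ⟪ν, b i⟫ ^ 2 = ‖ν‖ ^ 2 := by
        rw [← b.sum_sq_inner_right ν]
        exact Finset.sum_congr rfl fun i _ => by rw [real_inner_comm]
      rw [Finset.sum_congr rfl (fun i _ => hvv (b i)), ← Finset.sum_mul, h1, hν.norm]; ring
    rw [hνv]
    exact mul_pos hνγ (htr ▸ hT)

/-- The reflected difference grows at least linearly in the distance to the plane,
uniformly on compact parts of `Ω`. -/
theorem w_ge_linear (S : Setup Ω γ u f₁ f₂ lamc lam0 L G H) {l : ℝ} (hl : lamc ≤ l)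
    (hA : ∀ x ∈ Ω, l < ⟪γ, x⟫ → 0 < wfun u γ l x) {K : Set (EuclideanSpace ℝ (Fin n))}
    (hK : IsCompact K) (hKΩ : ∀ x ∈ K, x ∈ Ω ∧ l ≤ ⟪γ, x⟫) :
    ∃ ε > 0, ∀ x ∈ K, ε * (⟪γ, x⟫ - l) ≤ wfun u γ l x := by
  have key : ∃ ε > 0, ∀ x ∈ K, l ≤ ⟪γ, x⟫ → ε * (⟪γ, x⟫ - l) ≤ wfun u γ l x := by
    refine hK.induction_on (p := fun s => ∃ ε > 0, ∀ x ∈ s, l ≤ ⟪γ, x⟫ →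
      ε * (⟪γ, x⟫ - l) ≤ wfun u γ l x) ⟨1, one_pos, by simp⟩ ?_ ?_ ?_
    · rintro s t hst ⟨ε, hε, h⟩
      exact ⟨ε, hε, fun x hx => h x (hst hx)⟩
    · rintro s t ⟨ε, hε, h⟩ ⟨ε', hε', h'⟩
      refine ⟨min ε ε', lt_min hε hε', ?_⟩
      rintro x (hx | hx) hxl
      · exact (mul_le_mul_of_nonneg_right (min_le_left _ _) (by linarith)).trans (h x hx hxl)
      · exact (mul_le_mul_of_nonneg_right (min_le_right _ _) (by linarith)).trans (h' x hx hxl)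
    · intro x hx
      obtain ⟨hxΩ, hxl⟩ := hKΩ x hx
      rcases hxl.lt_or_eq with hlt | heq
      · have hw := hA x hxΩ hlt
        have hcw : ContinuousAt (wfun u γ l) x :=
          (S.w_contDiffAt hxΩ (S.cap l hl x hxΩ hlt)).continuousAt
        have hci : ContinuousAt (fun y : EuclideanSpace ℝ (Fin n) => ⟪γ, y⟫ - l) x := by fun_prop
        set B := ⟪γ, x⟫ - l + 1 with hB
        have hB0 : 0 < B := by rw [hB]; linarith
        refine ⟨{y | wfun u γ l x / 2 < wfun u γ l y ∧ ⟪γ, y⟫ - l < B}, mem_nhdsWithin_of_mem_nhds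
          ((hcw.eventually (lt_mem_nhds (by linarith))).and
            (hci.eventually (gt_mem_nhds (by simp only [hB]; linarith)))),
          wfun u γ l x / 2 / B, by positivity, ?_⟩
        rintro y ⟨hy1, hy2⟩ hyl
        have h3 : wfun u γ l x / 2 / B * (⟪γ, y⟫ - l) ≤ wfun u γ l x / 2 / B * B :=
          mul_le_mul_of_nonneg_left hy2.le (by positivity)
        rw [div_mul_cancel₀ _ hB0.ne'] at h3
        linarith
      · have hG := S.neg_on_plane hl hxΩ heq.symm (by
          filter_upwards [S.isOpen.mem_nhds hxΩ] with y hy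
          exact hA y hy)
        have hcG : ContinuousAt (fun y => G y γ) x :=
          ((S.reg.cG.continuousAt (mem_of_superset (S.isOpen.mem_nhds hxΩ)
            subset_closure))).clm_apply continuousAt_const
        obtain ⟨r, hr, hball⟩ := Metric.mem_nhds_iff.1 (inter_mem (S.isOpen.mem_nhds hxΩ)
          (hcG.eventually (gt_mem_nhds (show G x γ < G x γ / 2 by linarith))))
        refine ⟨ball x r, mem_nhdsWithin_of_mem_nhds (ball_mem_nhds x hr), - G x γ, by linarith, ?_⟩
        intro y hy hyl
        have hy' : planeRefl γ l y ∈ ball x r := by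
          have h1 := dist_planeRefl S.norm l y x
          rw [planeRefl_of_eq heq.symm] at h1
          rw [mem_ball, h1]; exact hy
        have hder : ∀ z ∈ ball x r, HasFDerivWithinAt u (G z) (ball x r) z := fun z hz =>
          (S.reg.dG z (subset_closure (hball hz).1)).mono
            (fun z hz => subset_closure (hball hz).1)
        obtain ⟨z, hz, hz2⟩ := domain_mvt hder (convex_ball x r) hy hy'
        have hzb : z ∈ ball x r := (convex_ball x r).segment_subset hy hy' hz
        have hd : planeRefl γ l y - y = (2 * (l - ⟪γ, y⟫)) • γ := by
          unfold planeRefl; module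
        rw [hd, map_smul, smul_eq_mul] at hz2
        unfold wfun
        rw [hz2]
        have h8 : G z γ < G x γ / 2 := (hball hzb).2
        nlinarith
  obtain ⟨ε, hε, h⟩ := key
  exact ⟨ε, hε, fun x hx => h x hx (hKΩ x hx).2⟩

/-- Serrin's corner argument: at a boundary point where the plane is orthogonal to the boundary,
the mixed second derivative `∂_ν ∂_γ u` is positive. -/
theorem bdry_orthogonal (S : Setup Ω γ u f₁ f₂ lamc lam0 L G H) {l : ℝ} (hl : lamc ≤ l)
    (hA : ∀ x ∈ Ω, l < ⟪γ, x⟫ → 0 < wfun u γ l x) {Q ν : EuclideanSpace ℝ (Fin n)}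
    (hν : BdryNormal Ω Q ν) (hQl : ⟪γ, Q⟫ = l) (hνγ : ⟪ν, γ⟫ = 0) : 0 < H Q ν γ := by
  have hQc := frontier_subset_closure hν.mem
  have hγν : ⟪γ, ν⟫ = 0 := by rw [real_inner_comm]; exact hνγ
  have hνν : ⟪ν, ν⟫ = 1 := by rw [real_inner_self_eq_norm_sq, hν.norm]; norm_num
  have hγγ : ⟪γ, γ⟫ = 1 := by rw [real_inner_self_eq_norm_sq, S.norm]; norm_num
  obtain ⟨R, hR, hball⟩ := hν.ball
  set c := Q - R • ν with hc
  have hdist : dist Q c = R := by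
    rw [hc, dist_eq_norm, sub_sub_cancel, norm_smul, hν.norm, Real.norm_eq_abs, abs_of_pos hR,
      mul_one]
  have hγc : ⟪γ, c⟫ = l := by rw [hc, inner_sub_right, inner_smul_right, hγν, hQl]; ring
  set K := {x : EuclideanSpace ℝ (Fin n) | dist x c ≤ R ∧ dist x Q ≤ R / 2 ∧ 0 ≤ ⟪γ, x⟫ + -l}
    with hK
  set K' := {x : EuclideanSpace ℝ (Fin n) | dist x c ≤ R ∧ dist x Q = R / 2 ∧ 0 ≤ ⟪γ, x⟫ + -l}
    with hK'
  have hK'c : IsCompact K' := by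
    apply (isCompact_closedBall c R).of_isClosed_subset
    · apply IsClosed.and
      · exact isClosed_le (by fun_prop) continuous_const
      · apply IsClosed.and
        · exact isClosed_eq (by fun_prop) continuous_const
        · exact isClosed_le continuous_const (by fun_prop)
    · intro x hx; exact hx.1
  have hQne : ∀ x, dist x Q = R / 2 → x ≠ Q := by
    rintro x hx rfl
    rw [dist_self] at hx
    linarith
  obtain ⟨ε, hε, hεK⟩ := S.w_ge_linear hl hA hK'c (fun x hx =>
    ⟨hball x hx.1 (hQne x hx.2.1), by linarith [hx.2.2]⟩)
  have hwT : ∀ x, ⟪γ, x⟫ = l → wfun u γ l x = 0 := fun x hx => by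
    simp [wfun, planeRefl_of_eq hx]
  have hopen : ∀ x, dist x c < R → x ∈ Ω := fun x hx => hball x hx.le (by
    rintro rfl; linarith)
  obtain ⟨κ, hκ, hκK⟩ := barrier_bound (g := γ) (s := -l) (w := wfun u γ l) (L := L) hR S.L0 hε
    hdist hK
    ((S.w_cont hl).mono (fun x hx => by
      refine ⟨?_, by linarith [hx.2.2]⟩
      by_cases hxQ : x = Q
      · rwa [hxQ]
      · exact subset_closure (hball x hx.1 hxQ)))
    (fun x hx => by
      have hxl : l ≤ ⟪γ, x⟫ := by linarith [hx.2.2]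
      rcases hxl.lt_or_eq with h | h
      · refine (hA x (hball x hx.1 ?_) h).le
        rintro rfl
        linarith
      · exact (hwT x h.symm).ge)
    (fun x hx _ hxl => by
      have hxl' : l < ⟪γ, x⟫ := by linarith
      have hxΩ := hopen x hx
      exact ⟨S.w_contDiffAt hxΩ (S.cap l hl x hxΩ hxl'),
        S.w_lap hxΩ (S.cap l hl x hxΩ hxl') (hA x hxΩ hxl').le⟩)
    (fun x _ => by rw [inner_sub_right, hγc]; linarith)
    (fun x hx hxQ => hεK x ⟨hx.1, hxQ, hx.2.2⟩)
  have hin : ∀ v, ⟪ν, v⟫ < 0 → ∀ᶠ t in 𝓝[>] (0 : ℝ), Q + t • v ∈ closure Ω := fun v hv =>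
    (hν.inward v hv).mono fun t ht => subset_closure ht
  set v₁ := -γ - ν with hv₁
  set v₂ := γ - ν with hv₂
  have hi₁ : ⟪ν, v₁⟫ < 0 := by rw [hv₁, inner_sub_right, inner_neg_right, hνγ, hνν]; norm_num
  have hi₂ : ⟪ν, v₂⟫ < 0 := by rw [hv₂, inner_sub_right, hνγ, hνν]; norm_num
  have hGγ : G Q γ = 0 := S.G_tangent hν.mem hν.inward (ne_zero_of_normal hν) hνγ
  have hfun : ∀ t : ℝ, wfun u γ l (Q + t • v₂) = u (Q + t • v₁) - u (Q + t • v₂) := by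
    intro t
    unfold wfun
    congr 2
    unfold planeRefl
    rw [hv₁, hv₂, inner_add_right, inner_smul_right, inner_sub_right, hγγ, hγν, hQl]
    module
  have h1 := second_order (m := fun t => u (Q + t • v₁) - u (Q + t • v₂))
    (m₁ := fun t => G (Q + t • v₁) v₁ - G (Q + t • v₂) v₂)
    (m₂ := H Q v₁ v₁ - H Q v₂ v₂) (κ := κ * R)
    (((hν.inward v₁ hi₁).and (hν.inward v₂ hi₂)).mono fun t ht =>
      (S.reg.hasDerivAt_line ht.1).sub (S.reg.hasDerivAt_line ht.2))
    ((hasDerivWithinAt_ray (S.reg.dG Q hQc) (hin v₁ hi₁)).continuousWithinAt.sub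
      (hasDerivWithinAt_ray (S.reg.dG Q hQc) (hin v₂ hi₂)).continuousWithinAt)
    (by simp [hv₁, hv₂, hGγ])
    ((S.reg.ray_G v₁ hQc (hin v₁ hi₁)).sub (S.reg.ray_G v₂ hQc (hin v₂ hi₂)))
    (by
      filter_upwards [Ioo_mem_nhdsGT (show (0 : ℝ) < R / 4 by positivity)] with t ht
      have hsq : dist (Q + t • v₂) c ^ 2 = (R - t) ^ 2 + t ^ 2 := by
        have h2 : Q + t • v₂ - c = (R - t) • ν + t • γ := by rw [hc, hv₂]; module
        rw [dist_eq_norm, h2, norm_add_sq_real, norm_smul, norm_smul, hν.norm, S.norm,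
          inner_smul_left, inner_smul_right, hνγ]
        simp
      have hQd : dist (Q + t • v₂) Q ^ 2 = 2 * t ^ 2 := by
        rw [dist_self_add_left, norm_smul, mul_pow, hv₂, norm_sub_sq_real, hγν, S.norm, hν.norm,
          Real.norm_eq_abs, sq_abs]
        ring
      have hγt : ⟪γ, Q + t • v₂⟫ + -l = t := by
        rw [hv₂, inner_add_right, inner_smul_right, inner_sub_right, hγγ, hγν, hQl]; ring
      have hmem : Q + t • v₂ ∈ K := by
        refine ⟨?_, ?_, by rw [hγt]; exact ht.1.le⟩
        · apply abs_le_of_sq_le_sq' _ hR.le |>.2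
          rw [hsq]; nlinarith [ht.1, ht.2]
        · apply abs_le_of_sq_le_sq' _ (by positivity : (0 : ℝ) ≤ R / 2) |>.2
          rw [hQd]; nlinarith [ht.1, ht.2]
      have h3 := hκK _ hmem
      rw [hγt, hsq, hfun] at h3
      simp only [zero_smul, add_zero, sub_self, sub_zero]
      refine le_trans ?_ h3
      have h4 : R * t ^ 2 ≤ t * (R ^ 2 - ((R - t) ^ 2 + t ^ 2)) := by nlinarith [ht.1, ht.2, mul_pos ht.1 ht.1]
      calc κ * R * t ^ 2 = κ * (R * t ^ 2) := by ring
        _ ≤ _ := mul_le_mul_of_nonneg_left h4 hκ.le)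
  have h2 : H Q v₁ v₁ - H Q v₂ v₂ = 4 * H Q ν γ := by
    have hsymm := S.reg.symm Q hQc γ ν
    simp only [hv₁, hv₂, map_sub, map_neg, sub_apply,
      neg_apply, hsymm]
    ring
  have : 0 < κ * R := by positivity
  linarith

end Setup

/-! ### Moving the plane -/

/-- Starting in `Ω` near `Q ∈ ∂Ω` and moving along the outer normal at `Q`, one meets the boundary
near `Q`. -/
theorem BdryNormal.exists_walk {n : ℕ} {Ω : Set (EuclideanSpace ℝ (Fin n))}
    {Q ν : EuclideanSpace ℝ (Fin n)} (hν : BdryNormal Ω Q ν) (hΩo : IsOpen Ω) {ρ : ℝ}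
    (hρ : 0 < ρ) : ∀ᶠ x in 𝓝 Q, x ∈ Ω → ∃ t : ℝ, 0 < t ∧ x + t • ν ∈ frontier Ω ∧
      (∀ r : ℝ, 0 ≤ r → r < t → x + r • ν ∈ Ω) ∧
      ∀ r : ℝ, 0 ≤ r → r ≤ t → dist (x + r • ν) Q < ρ := by
  have hνν : ⟪ν, ν⟫ = 1 := by rw [real_inner_self_eq_norm_sq, hν.norm]; norm_num
  obtain ⟨s, hs1, hs2⟩ := ((hν.outward ν (by rw [hνν]; norm_num)).and
    (Ioo_mem_nhdsGT (show (0 : ℝ) < ρ / 2 by positivity))).exists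
  have hc : ContinuousAt (fun x : EuclideanSpace ℝ (Fin n) => x + s • ν) Q := by fun_prop
  filter_upwards [hc.eventually (isClosed_closure.isOpen_compl.mem_nhds hs1),
    ball_mem_nhds Q (show (0 : ℝ) < ρ / 2 by positivity)] with x hx1 hx2 hxΩ
  obtain ⟨t, ht0, hts, hf, hin⟩ := exists_exit hΩo hxΩ hs2.1.le (fun h => hx1 (subset_closure h))
  refine ⟨t, ht0, hf, hin, fun r hr0 hrt => ?_⟩
  have h1 : dist (x + r • ν) x = r := by
    rw [dist_self_add_left, norm_smul, hν.norm, Real.norm_eq_abs, abs_of_nonneg hr0, mul_one]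
  have h2 := dist_triangle (x + r • ν) x Q
  have h3 : dist x Q < ρ / 2 := hx2
  linarith [hs2.2]

theorem lt_of_hasDerivAt_pos {g g' : ℝ → ℝ} {t : ℝ} (ht : 0 < t) (hc : ContinuousOn g (Icc 0 t))
    (hd : ∀ r ∈ Ioo 0 t, HasDerivAt g (g' r) r) (hpos : ∀ r ∈ Ioo 0 t, 0 < g' r) : g 0 < g t := by
  have := strictMonoOn_of_deriv_pos (convex_Icc 0 t) hc (fun r hr => by
    rw [interior_Icc] at hr
    rw [(hd r hr).deriv]; exact hpos r hr)
  exact this (left_mem_Icc.2 ht.le) (right_mem_Icc.2 ht.le) ht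

namespace Setup

variable {n : ℕ} {Ω : Set (EuclideanSpace ℝ (Fin n))} {γ : EuclideanSpace ℝ (Fin n)}
  {u : EuclideanSpace ℝ (Fin n) → ℝ} {f₁ f₂ : ℝ → ℝ} {lamc lam0 L : ℝ}
  {G : EuclideanSpace ℝ (Fin n) → EuclideanSpace ℝ (Fin n) →L[ℝ] ℝ}
  {H : EuclideanSpace ℝ (Fin n) →
      EuclideanSpace ℝ (Fin n) →L[ℝ] EuclideanSpace ℝ (Fin n) →L[ℝ] ℝ}

/-- Near a boundary point on the plane `T_l`, `∂_γ u` is negative inside `Ω`. -/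
theorem bdry_near (S : Setup Ω γ u f₁ f₂ lamc lam0 L G H) {l : ℝ} (hl : lamc < l)
    (hA : ∀ x ∈ Ω, l < ⟪γ, x⟫ → 0 < wfun u γ l x) {Q : EuclideanSpace ℝ (Fin n)}
    (hQ : Q ∈ frontier Ω) (hQl : ⟪γ, Q⟫ = l) : ∀ᶠ x in 𝓝 Q, x ∈ Ω → G x γ < 0 := by
  have hQc := frontier_subset_closure hQ
  obtain ⟨ν, hν⟩ := exists_bdryNormal S.c2 hQ
  have halt : G Q γ < 0 ∨ 0 < H Q ν γ := by
    rcases (S.normal_nonneg hν (by rw [hQl]; exact hl)).lt_or_eq with h | h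
    · exact S.bdry_transversal hν h
    · exact Or.inr (S.bdry_orthogonal hl.le hA hν hQl h.symm)
  rcases halt with h | h
  · have h1 : Tendsto (fun x => G x γ) (𝓝[closure Ω] Q) (𝓝 (G Q γ)) :=
      tendsto_clm_apply (S.reg.cG Q hQc).tendsto tendsto_const_nhds
    filter_upwards [eventually_nhdsWithin_iff.1 (h1.eventually (gt_mem_nhds h))] with x hx hxΩ
    exact hx (subset_closure hxΩ)
  · have h1 : Tendsto (fun x => H x ν γ) (𝓝[closure Ω] Q) (𝓝 (H Q ν γ)) :=
      tendsto_clm_apply (tendsto_clm_apply (S.reg.cH Q hQc).tendsto tendsto_const_nhds)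
        tendsto_const_nhds
    have h2 : ContinuousAt (fun x : EuclideanSpace ℝ (Fin n) => ⟪γ, x⟫) Q := by fun_prop
    obtain ⟨ρ, hρ, hball⟩ := Metric.mem_nhds_iff.1 (inter_mem
      (eventually_nhdsWithin_iff.1 (h1.eventually (lt_mem_nhds h)))
      (h2.eventually (lt_mem_nhds (show lamc < ⟪γ, Q⟫ by rw [hQl]; exact hl))))
    filter_upwards [hν.exists_walk S.isOpen hρ] with x hx hxΩ
    obtain ⟨t, ht0, hf, hin, hd⟩ := hx hxΩ
    have h3 := S.G_bdry_nonpos hf (hball (hd t ht0.le le_rfl)).2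
    have hseg : ∀ r ∈ Icc 0 t, x + r • ν ∈ closure Ω := by
      intro r hr
      rcases hr.2.lt_or_eq with h4 | h4
      · exact subset_closure (hin r hr.1 h4)
      · rw [h4]; exact frontier_subset_closure hf
    have h5 := lt_of_hasDerivAt_pos (g := fun r : ℝ => G (x + r • ν) γ)
      (g' := fun r => H (x + r • ν) ν γ) ht0
      ((S.reg.cG.comp (by fun_prop) hseg).clm_apply continuousOn_const)
      (fun r hr => S.reg.hasDerivAt_line_G S.isOpen γ (hin r hr.1.le hr.2))
      (fun r hr => (hball (hd r hr.1.le hr.2.le)).1 (hseg r (Ioo_subset_Icc_self hr)))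
    simp only [zero_smul, add_zero] at h5
    linarith

/-- Persistence near a point of the plane. -/
theorem open_near_plane (S : Setup Ω γ u f₁ f₂ lamc lam0 L G H) {l : ℝ} (hl : lamc < l)
    {x : EuclideanSpace ℝ (Fin n)} (hxl : ⟪γ, x⟫ = l) (hG : ∀ᶠ y in 𝓝 x, y ∈ Ω → G y γ < 0) :
    ∀ᶠ p : ℝ × EuclideanSpace ℝ (Fin n) in 𝓝 (l, x),
      p.2 ∈ Ω → p.1 < ⟪γ, p.2⟫ → 0 < wfun u γ p.1 p.2 := by
  obtain ⟨r, hr, hball⟩ := Metric.mem_nhds_iff.1 hG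
  have hrefl : ∀ᶠ p : ℝ × EuclideanSpace ℝ (Fin n) in 𝓝 (l, x), planeRefl γ p.1 p.2 ∈ ball x r := by
    have h1 := (continuous_planeRefl_prod γ).tendsto (l, x)
    simp only [planeRefl_of_eq hxl] at h1
    exact h1.eventually (ball_mem_nhds x hr)
  have hsnd : ∀ᶠ p : ℝ × EuclideanSpace ℝ (Fin n) in 𝓝 (l, x), p.2 ∈ ball x r :=
    (continuous_snd.tendsto (l, x)).eventually (ball_mem_nhds x hr)
  have hfst : ∀ᶠ p : ℝ × EuclideanSpace ℝ (Fin n) in 𝓝 (l, x), lamc < p.1 :=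
    (continuous_fst.tendsto (l, x)).eventually (lt_mem_nhds hl)
  filter_upwards [hrefl, hsnd, hfst] with ⟨m, y⟩ h1 h2 h3 hy hmy
  simp only at h1 h2 h3 hy hmy ⊢
  set t := 2 * (⟪γ, y⟫ - m) with ht
  have ht0 : 0 < t := by rw [ht]; linarith
  have hyt : planeRefl γ m y = y + t • (-γ) := by unfold planeRefl; rw [ht]; module
  have hin : ∀ r ∈ Icc 0 t, y + r • (-γ) ∈ Ω := by
    intro r hr
    rw [smul_neg, ← sub_eq_add_neg]
    exact S.sub_mem hy hr.1 (hr.2.trans (by rw [ht]; linarith))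
  have hinb : ∀ s ∈ Icc 0 t, y + s • (-γ) ∈ ball x r := by
    intro s hs
    rw [hyt] at h1
    have h4 := (convex_ball x r) h2 h1 (show 0 ≤ 1 - s / t by
      rw [sub_nonneg, div_le_one ht0]; exact hs.2) (div_nonneg hs.1 ht0.le) (by ring)
    convert h4 using 1
    rw [smul_add, smul_smul, div_mul_cancel₀ _ ht0.ne']
    module
  have h5 := lt_of_hasDerivAt_pos (g := fun r : ℝ => u (y + r • (-γ)))
      (g' := fun r => G (y + r • (-γ)) (-γ)) ht0
      (fun s hs => (S.reg.hasDerivAt_line (hin s hs)).continuousAt.continuousWithinAt)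
      (fun s hs => S.reg.hasDerivAt_line (hin s (Ioo_subset_Icc_self hs)))
      (fun s hs => by
        have hs' := Ioo_subset_Icc_self hs
        have h6 : G (y + s • (-γ)) γ < 0 := hball (hinb s hs') (hin s hs')
        rw [map_neg]; linarith)
  simp only [zero_smul, add_zero] at h5
  unfold wfun
  rw [hyt]
  linarith

/-- Persistence near a point of the closed cap where the reflected value is strictly larger. -/
theorem open_near_pos (S : Setup Ω γ u f₁ f₂ lamc lam0 L G H) {l : ℝ} (hl : lamc < l)
    {x : EuclideanSpace ℝ (Fin n)} (hx : x ∈ closure Ω) (hxl : l < ⟪γ, x⟫)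
    (hw : 0 < wfun u γ l x) :
    ∀ᶠ p : ℝ × EuclideanSpace ℝ (Fin n) in 𝓝 (l, x),
      p.2 ∈ Ω → p.1 < ⟪γ, p.2⟫ → 0 < wfun u γ p.1 p.2 := by
  have hz := S.refl_mem_closure hx hl.le hxl.le
  set m := (u (planeRefl γ l x) + u x) / 2 with hm
  unfold wfun at hw
  have h1 : ∀ᶠ y in 𝓝 (planeRefl γ l x), y ∈ closure Ω → m < u y :=
    eventually_nhdsWithin_iff.1 ((S.reg.cu _ hz).tendsto.eventually
      (lt_mem_nhds (by rw [hm]; linarith)))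
  have h2 : ∀ᶠ y in 𝓝 x, y ∈ closure Ω → u y < m :=
    eventually_nhdsWithin_iff.1 ((S.reg.cu _ hx).tendsto.eventually
      (gt_mem_nhds (by rw [hm]; linarith)))
  have h3 := ((continuous_planeRefl_prod γ).tendsto (l, x)).eventually h1
  have h4 := (continuous_snd.tendsto (l, x)).eventually h2
  have hfst : ∀ᶠ p : ℝ × EuclideanSpace ℝ (Fin n) in 𝓝 (l, x), lamc < p.1 :=
    (continuous_fst.tendsto (l, x)).eventually (lt_mem_nhds hl)
  filter_upwards [h3, h4, hfst] with p h5 h6 h7 hp hpl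
  have h8 := h5 (subset_closure (S.cap p.1 h7.le p.2 hp hpl))
  have h9 := h6 (subset_closure hp)
  unfold wfun
  linarith

/-- Persistence near a boundary point whose reflection is again a boundary point: there `γ` is
tangent to the boundary and Hopf's lemma compares the normal derivatives at the two points. -/
theorem open_near_tangency (S : Setup Ω γ u f₁ f₂ lamc lam0 L G H) {l : ℝ} (hl : lamc < l)
    (hA : ∀ x ∈ Ω, l < ⟪γ, x⟫ → 0 < wfun u γ l x)
    {x : EuclideanSpace ℝ (Fin n)} (hx : x ∈ frontier Ω) (hxl : l < ⟪γ, x⟫)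
    (hz : planeRefl γ l x ∉ Ω) :
    ∀ᶠ p : ℝ × EuclideanSpace ℝ (Fin n) in 𝓝 (l, x),
      p.2 ∈ Ω → p.1 < ⟪γ, p.2⟫ → 0 < wfun u γ p.1 p.2 := by
  have hxc := frontier_subset_closure hx
  have hzc := S.refl_mem_closure hxc hl.le hxl.le
  have hzf := mem_frontier_of_not_mem S.isOpen hzc hz
  obtain ⟨ν, hν⟩ := exists_bdryNormal S.c2 hx
  have hνν : ⟪ν, ν⟫ = 1 := by rw [real_inner_self_eq_norm_sq, hν.norm]; norm_num
  have hνγ : ⟪γ, ν⟫ = 0 := by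
    rw [real_inner_comm]
    refine le_antisymm (not_lt.1 fun h => hz ?_) (S.normal_nonneg hν (hl.trans hxl))
    obtain ⟨t, ht1, ht2⟩ := ((hν.inward (-γ) (by rw [inner_neg_right]; linarith)).and
      (Ioo_mem_nhdsGT (show (0 : ℝ) < min (2 * (l - lamc)) (2 * (⟪γ, x⟫ - l)) from
        lt_min (by linarith) (by linarith)))).exists
    have ht3 := ht2.2.trans_le (min_le_left _ _)
    have ht4 := ht2.2.trans_le (min_le_right _ _)
    have hγt : ⟪γ, x + t • (-γ)⟫ = ⟪γ, x⟫ - t := by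
      rw [smul_neg, ← neg_smul, inner_add_smul_self S.norm]; ring
    have h1 := S.cap (l - t / 2) (by linarith) _ ht1 (by rw [hγt]; linarith)
    have h2 : planeRefl γ (l - t / 2) (x + t • (-γ)) = planeRefl γ l x := by
      unfold planeRefl
      rw [hγt]
      module
    rwa [h2] at h1
  have hreflν : ∀ (m : ℝ) (y : EuclideanSpace ℝ (Fin n)) (r : ℝ),
      planeRefl γ m (y + r • ν) = planeRefl γ m y + r • ν := by
    intro m y r
    unfold planeRefl
    rw [inner_add_right, inner_smul_right, hνγ]
    module
  obtain ⟨R₀, hR₀, hball₀⟩ := hν.ball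
  -- a touching ball small enough to lie in the halfspace `γ·y > l`
  set R := min R₀ ((⟪γ, x⟫ - l) / 4) with hR'
  have hR : 0 < R := lt_min hR₀ (by linarith)
  set c := x - R • ν with hc
  have hdist : dist x c = R := by
    rw [hc, dist_eq_norm, sub_sub_cancel, norm_smul, hν.norm, Real.norm_eq_abs, abs_of_pos hR,
      mul_one]
  have hballΩ : ∀ y, dist y c ≤ R → y ≠ x → y ∈ Ω := by
    intro y hy hyx
    refine hball₀ y ?_ hyx
    have h1 : dist c (x - R₀ • ν) = R₀ - R := by
      have h2 : c - (x - R₀ • ν) = (R₀ - R) • ν := by rw [hc]; module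
      rw [dist_eq_norm, h2, norm_smul, hν.norm, Real.norm_eq_abs,
        abs_of_nonneg (sub_nonneg.2 (min_le_left _ _)), mul_one]
    linarith [dist_triangle y c (x - R₀ • ν)]
  have hballl : ∀ y, dist y c ≤ R → l < ⟪γ, y⟫ := by
    intro y hy
    have h1 : ‖x - y‖ ≤ 2 * R := by
      rw [← dist_eq_norm]
      have := dist_triangle x c y
      rw [dist_comm c y] at this
      linarith
    have h2 := real_inner_le_norm γ (x - y)
    rw [S.norm, one_mul, inner_sub_right] at h2
    have h3 : R ≤ (⟪γ, x⟫ - l) / 4 := min_le_right _ _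
    linarith
  have hcl : ∀ y, dist y c ≤ R → y ∈ closure Ω := by
    intro y hy
    by_cases hyx : y = x
    · rwa [hyx]
    · exact subset_closure (hballΩ y hy hyx)
  have hwx : wfun u γ l x = 0 := by simp [wfun, S.dir x hx, S.dir _ hzf]
  obtain ⟨κ, hκ, hκt⟩ := hopf (w := wfun u γ l) hR S.L0 hdist
    ((S.w_cont hl.le).mono fun y hy => ⟨hcl y hy, (hballl y hy).le⟩) hwx.ge
    (fun y hy hyx => hA y (hballΩ y hy hyx) (hballl y hy))
    (fun y hy => by
      have hyc : dist y c < R := hy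
      have hyx : y ≠ x := by rintro rfl; linarith
      have hyΩ := hballΩ y hyc.le hyx
      have hyl := hballl y hyc.le
      exact ⟨S.w_contDiffAt hyΩ (S.cap l hl.le y hyΩ hyl),
        S.w_lap hyΩ (S.cap l hl.le y hyΩ hyl) (hA y hyΩ hyl).le⟩)
  have hdir : c - x = (-R) • ν := by rw [hc]; module
  have hin : ∀ᶠ t in 𝓝[>] (0 : ℝ), x + t • ((-R) • ν) ∈ closure Ω :=
    (hν.inward ((-R) • ν) (by rw [inner_smul_right, hνν]; linarith)).mono
      fun t ht => subset_closure ht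
  have hinz : ∀ᶠ t in 𝓝[>] (0 : ℝ), planeRefl γ l x + t • ((-R) • ν) ∈ closure Ω := by
    filter_upwards [hin] with t ht
    rw [smul_smul, ← hreflν, ← smul_smul]
    refine S.refl_mem_closure ht hl.le ?_
    rw [smul_smul, inner_add_right, inner_smul_right, hνγ]
    linarith
  have hder : HasDerivWithinAt (fun t : ℝ => wfun u γ l (x + t • (c - x)))
      (G (planeRefl γ l x) ((-R) • ν) - G x ((-R) • ν)) (Ioi 0) 0 := by
    have h1 := (hasDerivWithinAt_ray (S.reg.dG _ hzc) hinz).sub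
      (hasDerivWithinAt_ray (S.reg.dG _ hxc) hin)
    have h2 : (fun t : ℝ => wfun u γ l (x + t • (c - x))) =
        fun t : ℝ => u (planeRefl γ l x + t • ((-R) • ν)) - u (x + t • ((-R) • ν)) := by
      funext t
      unfold wfun
      rw [hdir, smul_smul, hreflν]
    rw [h2]
    exact h1
  have hκ' := le_of_hasDerivWithinAt_of_le hder (κ := κ) (by
    filter_upwards [Ioo_mem_nhdsGT (show (0 : ℝ) < 1 / 2 by norm_num)] with t ht
    have h3 := hκt t ⟨ht.1.le, ht.2.le⟩
    simpa [hwx] using h3)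
  rw [map_smul, map_smul, smul_eq_mul, smul_eq_mul] at hκ'
  have hcmp : G (planeRefl γ l x) ν < G x ν := by nlinarith
  obtain ⟨m, hm1, hm2⟩ := exists_between hcmp
  have h1 : ∀ᶠ y in 𝓝 (planeRefl γ l x), y ∈ closure Ω → G y ν < m := by
    have : Tendsto (fun y => G y ν) (𝓝[closure Ω] (planeRefl γ l x))
      (𝓝 (G (planeRefl γ l x) ν)) :=
      tendsto_clm_apply (S.reg.cG _ hzc).tendsto tendsto_const_nhds
    exact eventually_nhdsWithin_iff.1 (this.eventually (gt_mem_nhds hm1))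
  have h2 : ∀ᶠ y in 𝓝 x, y ∈ closure Ω → m < G y ν := by
    have : Tendsto (fun y => G y ν) (𝓝[closure Ω] x) (𝓝 (G x ν)) :=
      tendsto_clm_apply (S.reg.cG _ hxc).tendsto tendsto_const_nhds
    exact eventually_nhdsWithin_iff.1 (this.eventually (lt_mem_nhds hm2))
  have h3 := ((continuous_planeRefl_prod γ).tendsto (l, x)).eventually h1
  rw [nhds_prod_eq] at h3
  obtain ⟨P, hP, P', hP', hPP⟩ := Filter.eventually_prod_iff.1 h3
  obtain ⟨ρ, hρ, hρball⟩ := Metric.mem_nhds_iff.1 (hP'.and h2)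
  have hfst : ∀ᶠ p : ℝ × EuclideanSpace ℝ (Fin n) in 𝓝 (l, x), lamc < p.1 ∧ P p.1 :=
    (continuous_fst.tendsto (l, x)).eventually ((lt_mem_nhds hl).and hP)
  have hsnd := (continuous_snd.tendsto (l, x)).eventually (hν.exists_walk S.isOpen hρ)
  filter_upwards [hfst, hsnd] with ⟨μ, y⟩ hμ hwalk hy hμy
  simp only at hμ hwalk hy hμy ⊢
  obtain ⟨t, ht0, hf, hinseg, hd⟩ := hwalk hy
  have hγr : ∀ r : ℝ, ⟪γ, y + r • ν⟫ = ⟪γ, y⟫ := fun r => by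
    rw [inner_add_right, inner_smul_right, hνγ]; ring
  have hseg : ∀ r ∈ Icc 0 t, y + r • ν ∈ closure Ω := by
    intro r hr
    rcases hr.2.lt_or_eq with h4 | h4
    · exact subset_closure (hinseg r hr.1 h4)
    · rw [h4]; exact frontier_subset_closure hf
  have hseg' : ∀ r ∈ Icc 0 t, planeRefl γ μ y + r • ν ∈ closure Ω := by
    intro r hr
    rw [← hreflν]
    exact S.refl_mem_closure (hseg r hr) hμ.1.le (by rw [hγr]; exact hμy.le)
  have h5 := lt_of_hasDerivAt_pos (g := fun r : ℝ => u (y + r • ν) - u (planeRefl γ μ y + r • ν))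
    (g' := fun r => G (y + r • ν) ν - G (planeRefl γ μ y + r • ν) ν) ht0
    ((S.reg.cu.comp (by fun_prop) hseg).sub (S.reg.cu.comp (by fun_prop) hseg'))
    (fun r hr => by
      refine (S.reg.hasDerivAt_line (hinseg r hr.1.le hr.2)).sub (S.reg.hasDerivAt_line ?_)
      rw [← hreflν]
      exact S.cap μ hμ.1.le _ (hinseg r hr.1.le hr.2) (by rw [hγr]; exact hμy))
    (fun r hr => by
      have hr' := Ioo_subset_Icc_self hr
      have hb := hρball (hd r hr'.1 hr'.2)
      have h6 := hb.2 (hseg r hr')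
      have h7 := hPP hμ.2 hb.1
      simp only [hreflν] at h7
      linarith [h7 (hseg' r hr')])
  simp only [zero_smul, add_zero] at h5
  have h6 := S.nonneg (hseg' t ⟨ht0.le, le_rfl⟩)
  rw [S.dir _ hf] at h5
  unfold wfun
  linarith

/-- The set of good positions beyond the critical one is open. -/
theorem open_step (S : Setup Ω γ u f₁ f₂ lamc lam0 L G H) {l : ℝ} (hl : lamc < l)
    (hA : ∀ x ∈ Ω, l < ⟪γ, x⟫ → 0 < wfun u γ l x) :
    ∀ᶠ m in 𝓝 l, ∀ x ∈ Ω, m < ⟪γ, x⟫ → 0 < wfun u γ m x := by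
  have := S.compact.eventually_forall_of_forall_eventually (x₀ := l)
    (P := fun m y => y ∈ Ω → m < ⟪γ, y⟫ → 0 < wfun u γ m y) (fun x hx => ?_)
  · filter_upwards [this] with m hm x hx
    exact hm x (subset_closure hx) hx
  rcases lt_trichotomy ⟪γ, x⟫ l with h | h | h
  · have hc : Continuous fun p : ℝ × EuclideanSpace ℝ (Fin n) => ⟪γ, p.2⟫ - p.1 := by fun_prop
    filter_upwards [(hc.tendsto (l, x)).eventually (gt_mem_nhds (show ⟪γ, x⟫ - l < 0 by linarith))]
      with p hp _ hp2
    linarith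
  · apply S.open_near_plane hl h
    by_cases hxΩ : x ∈ Ω
    · have hG := S.neg_on_plane hl.le hxΩ h (by
        filter_upwards [S.isOpen.mem_nhds hxΩ] with y hy
        exact hA y hy)
      have hcG : ContinuousAt (fun y => G y γ) x :=
        ((S.reg.cG.continuousAt (mem_of_superset (S.isOpen.mem_nhds hxΩ)
          subset_closure))).clm_apply continuousAt_const
      filter_upwards [hcG.eventually (gt_mem_nhds hG)] with y hy _
      exact hy
    · exact S.bdry_near hl hA (mem_frontier_of_not_mem S.isOpen hx hxΩ) h
  · by_cases hxΩ : x ∈ Ω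
    · exact S.open_near_pos hl hx h (hA x hxΩ h)
    have hxf := mem_frontier_of_not_mem S.isOpen hx hxΩ
    by_cases hz : planeRefl γ l x ∈ Ω
    · refine S.open_near_pos hl hx h ?_
      unfold wfun
      rw [S.dir x hxf]
      linarith [S.pos _ hz]
    · exact S.open_near_tangency hl hA hxf h hz

/-- The moving-plane conclusion: `u(x) < u(x^l)` in every cap beyond the critical position. -/
theorem all_caps (S : Setup Ω γ u f₁ f₂ lamc lam0 L G H) {l : ℝ} (hl : lamc < l) :
    ∀ x ∈ Ω, l < ⟪γ, x⟫ → 0 < wfun u γ l x := by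
  by_contra hcon
  set B := {m | lamc < m ∧ ¬ ∀ x ∈ Ω, m < ⟪γ, x⟫ → 0 < wfun u γ m x} with hB
  have hlB : l ∈ B := ⟨hl, hcon⟩
  have hbdd : BddAbove B := by
    refine ⟨lam0, fun m hm => not_lt.1 fun h => hm.2 fun x hx hmx => ?_⟩
    linarith [S.le x (subset_closure hx)]
  set s := sSup B with hs
  have hls : l ≤ s := le_csSup hbdd hlB
  have hcs : lamc < s := hl.trans_le hls
  have habove : ∀ m, s < m → ∀ x ∈ Ω, m < ⟪γ, x⟫ → 0 < wfun u γ m x := by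
    intro m hm
    by_contra h
    exact absurd (le_csSup hbdd (show m ∈ B from ⟨hcs.trans hm, h⟩)) (not_le.2 hm)
  have hAs : ∀ x ∈ Ω, s < ⟪γ, x⟫ → 0 < wfun u γ s x := by
    apply S.strict hcs
    intro x hx hxs
    have hz := S.cap s hcs.le x hx hxs
    have hc : ContinuousAt (fun m => wfun u γ m x) s := by
      have h1 : ContinuousAt (fun m => planeRefl γ m x) s := by
        unfold planeRefl; fun_prop
      have h2 : ContinuousAt u (planeRefl γ s x) := (S.reg.contDiffAt _ hz).continuousAt
      exact (ContinuousAt.comp (f := fun m => planeRefl γ m x) h2 h1).sub continuousAt_const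
    refine ge_of_tendsto (hc.tendsto.mono_left (nhdsWithin_le_nhds (s := Ioi s))) ?_
    filter_upwards [Ioo_mem_nhdsGT hxs] with m hm
    exact (habove m hm.1 x hx hm.2).le
  obtain ⟨ε, hε, hball⟩ := Metric.mem_nhds_iff.1 (S.open_step hcs hAs)
  obtain ⟨m, hmB, hm⟩ := exists_lt_of_lt_csSup ⟨l, hlB⟩ (show s - ε < s by linarith)
  have hms : m ≤ s := le_csSup hbdd hmB
  refine hmB.2 (hball ?_)
  rw [mem_ball, Real.dist_eq, abs_lt]
  constructor <;> linarith

end Setup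

/-! ### Symmetry at the critical position -/

theorem wfun_planeRefl {n : ℕ} {γ : EuclideanSpace ℝ (Fin n)} (hγ : ‖γ‖ = 1)
    (u : EuclideanSpace ℝ (Fin n) → ℝ) (l : ℝ) (x : EuclideanSpace ℝ (Fin n)) :
    wfun u γ l (planeRefl γ l x) = -wfun u γ l x := by
  unfold wfun
  rw [planeRefl_planeRefl hγ]
  ring

/-- The open set of points near which the reflection in `T_l` maps into `Ω` and preserves `u`. -/
def symmSet {n : ℕ} (Ω : Set (EuclideanSpace ℝ (Fin n))) (γ : EuclideanSpace ℝ (Fin n))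
    (u : EuclideanSpace ℝ (Fin n) → ℝ) (l : ℝ) : Set (EuclideanSpace ℝ (Fin n)) :=
  {x | ∀ᶠ y in 𝓝 x, planeRefl γ l y ∈ Ω ∧ wfun u γ l y = 0}

namespace Setup

variable {n : ℕ} {Ω : Set (EuclideanSpace ℝ (Fin n))} {γ : EuclideanSpace ℝ (Fin n)}
  {u : EuclideanSpace ℝ (Fin n) → ℝ} {f₁ f₂ : ℝ → ℝ} {lamc lam0 L : ℝ}
  {G : EuclideanSpace ℝ (Fin n) → EuclideanSpace ℝ (Fin n) →L[ℝ] ℝ}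
  {H : EuclideanSpace ℝ (Fin n) →
      EuclideanSpace ℝ (Fin n) →L[ℝ] EuclideanSpace ℝ (Fin n) →L[ℝ] ℝ}

theorem crit_nonneg (S : Setup Ω γ u f₁ f₂ lamc lam0 L G H) :
    ∀ x ∈ Ω, lamc < ⟪γ, x⟫ → 0 ≤ wfun u γ lamc x := by
  intro x hx hxs
  have hz := S.cap lamc le_rfl x hx hxs
  have hc : ContinuousAt (fun m => wfun u γ m x) lamc := by
    have h1 : ContinuousAt (fun m => planeRefl γ m x) lamc := by
      unfold planeRefl; fun_prop
    have h2 : ContinuousAt u (planeRefl γ lamc x) := (S.reg.contDiffAt _ hz).continuousAt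
    exact (ContinuousAt.comp (f := fun m => planeRefl γ m x) h2 h1).sub continuousAt_const
  refine ge_of_tendsto (hc.tendsto.mono_left (nhdsWithin_le_nhds (s := Ioi lamc))) ?_
  filter_upwards [Ioo_mem_nhdsGT hxs] with m hm
  exact (S.all_caps hm.1 x hx hm.2).le

theorem isOpen_cap (S : Setup Ω γ u f₁ f₂ lamc lam0 L G H) :
    IsOpen {x | x ∈ Ω ∧ lamc < ⟪γ, x⟫} := by
  have h : IsOpen {x : EuclideanSpace ℝ (Fin n) | lamc < ⟪γ, x⟫} :=
    isOpen_lt continuous_const (by fun_prop)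
  exact S.isOpen.inter h

/-- A zero of `w` in the critical cap propagates to all points joined to it inside the cap. -/
theorem crit_zero (S : Setup Ω γ u f₁ f₂ lamc lam0 L G H)
    {C : Set (EuclideanSpace ℝ (Fin n))} (hC : IsPreconnected C)
    (hCV : ∀ x ∈ C, x ∈ Ω ∧ lamc < ⟪γ, x⟫) {x₀ : EuclideanSpace ℝ (Fin n)} (hx₀ : x₀ ∈ C)
    (h0 : wfun u γ lamc x₀ = 0) : ∀ x ∈ C, wfun u γ lamc x = 0 :=
  strong_max_connected S.isOpen_cap S.L0
    (fun x hx => S.w_contDiffAt hx.1 (S.cap lamc le_rfl x hx.1 hx.2))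
    (fun x hx => S.w_lap hx.1 (S.cap lamc le_rfl x hx.1 hx.2) (S.crit_nonneg x hx.1 hx.2))
    (fun x hx => S.crit_nonneg x hx.1 hx.2) hC hCV hx₀ h0

theorem mem_symmSet_of_zero (S : Setup Ω γ u f₁ f₂ lamc lam0 L G H)
    {x : EuclideanSpace ℝ (Fin n)} (hx : x ∈ Ω) (hxl : lamc < ⟪γ, x⟫)
    (h0 : wfun u γ lamc x = 0) : x ∈ symmSet Ω γ u lamc := by
  obtain ⟨r, hr, hball⟩ := Metric.isOpen_iff.1 S.isOpen_cap x ⟨hx, hxl⟩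
  filter_upwards [ball_mem_nhds x hr] with y hy
  have hy' := hball hy
  exact ⟨S.cap lamc le_rfl y hy'.1 hy'.2, S.crit_zero (convex_ball x r).isPreconnected
    (fun z hz => hball hz) (mem_ball_self hr) h0 y hy⟩

/-- If `w` vanishes at one point of a half ball above the plane `T_{λ_c}`, it vanishes throughout
the ball, by the strong maximum principle and oddness under the reflection. -/
theorem mem_symmSet_of_plane (S : Setup Ω γ u f₁ f₂ lamc lam0 L G H)
    {x : EuclideanSpace ℝ (Fin n)} (hxl : ⟪γ, x⟫ = lamc) {r : ℝ}
    (hball : ball x r ⊆ Ω) {z : EuclideanSpace ℝ (Fin n)} (hz : z ∈ ball x r)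
    (hzl : lamc < ⟪γ, z⟫) (h0 : wfun u γ lamc z = 0) : x ∈ symmSet Ω γ u lamc := by
  have hr : 0 < r := pos_of_mem_ball hz
  have hrefl : ∀ y ∈ ball x r, planeRefl γ lamc y ∈ ball x r := by
    intro y hy
    have h1 := dist_planeRefl S.norm lamc y x
    rw [planeRefl_of_eq hxl] at h1
    rw [mem_ball, h1]
    exact hy
  have hhalf : ∀ y ∈ ball x r, lamc < ⟪γ, y⟫ → wfun u γ lamc y = 0 := by
    intro y hy hyl
    have hconv : Convex ℝ (ball x r ∩ {y | lamc < ⟪γ, y⟫}) :=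
      (convex_ball x r).inter (convex_halfSpace_gt (innerₗ _ γ).isLinear lamc)
    exact S.crit_zero hconv.isPreconnected (fun p hp => ⟨hball hp.1, hp.2⟩) ⟨hz, hzl⟩ h0 y ⟨hy, hyl⟩
  filter_upwards [ball_mem_nhds x hr] with y hy
  refine ⟨hball (hrefl y hy), ?_⟩
  rcases lt_trichotomy ⟪γ, y⟫ lamc with h | h | h
  · have h1 := hhalf _ (hrefl y hy) (by rw [inner_planeRefl S.norm]; linarith)
    rw [wfun_planeRefl S.norm] at h1
    linarith
  · simp [wfun, planeRefl_of_eq h]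
  · exact hhalf y hy h

/-- `symmSet` is relatively closed in `Ω`. Above the plane this is the strong maximum principle;
below, it follows by reflection once the limit is known to reflect into `Ω`; on the plane, a zero of
`w` in a nearby half ball is propagated to the full ball. -/
theorem symmSet_closed (S : Setup Ω γ u f₁ f₂ lamc lam0 L G H) :
    closure (symmSet Ω γ u lamc) ∩ Ω ⊆ symmSet Ω γ u lamc := by
  rintro x ⟨hxc, hx⟩
  have hopen : IsOpen (symmSet Ω γ u lamc) := isOpen_setOfPred_eventually_nhds
  have hfreq : ∃ᶠ z in 𝓝 x, z ∈ symmSet Ω γ u lamc := mem_closure_iff_frequently.1 hxc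
  rcases lt_trichotomy ⟪γ, x⟫ lamc with h | h | h
  · have hl' : ∀ z, ⟪γ, z⟫ < lamc → lamc < ⟪γ, planeRefl γ lamc z⟫ := fun z hz => by
      rw [inner_planeRefl S.norm]; linarith
    have hcr := (continuous_planeRefl γ lamc).tendsto x
    have hyc : planeRefl γ lamc x ∈ closure Ω :=
      mem_closure_of_frequently_of_tendsto (hfreq.mono fun z hz => hz.self_of_nhds.1) hcr
    -- the reflected value is `u x > 0`, so the reflected point is not on the boundary
    have hw : wfun u γ lamc x = 0 := by
      have : (𝓝[symmSet Ω γ u lamc] x).NeBot := mem_closure_iff_nhdsWithin_neBot.1 hxc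
      have h1 : Tendsto (fun z => u (planeRefl γ lamc z)) (𝓝[symmSet Ω γ u lamc] x)
          (𝓝 (u (planeRefl γ lamc x))) := by
        refine (S.reg.cu _ hyc).tendsto.comp (tendsto_nhdsWithin_iff.2
          ⟨hcr.mono_left nhdsWithin_le_nhds, ?_⟩)
        filter_upwards [self_mem_nhdsWithin] with z hz
        exact subset_closure (Filter.Eventually.self_of_nhds hz).1
      have h2 : Tendsto u (𝓝[symmSet Ω γ u lamc] x) (𝓝 (u x)) :=
        ((S.reg.contDiffAt _ hx).continuousAt.tendsto).mono_left nhdsWithin_le_nhds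
      have h3 : Tendsto (wfun u γ lamc) (𝓝[symmSet Ω γ u lamc] x) (𝓝 (wfun u γ lamc x)) :=
        h1.sub h2
      refine tendsto_nhds_unique h3 (tendsto_const_nhds.congr' ?_)
      filter_upwards [self_mem_nhdsWithin] with z hz
      exact (Filter.Eventually.self_of_nhds hz).2.symm
    have hyΩ : planeRefl γ lamc x ∈ Ω := by
      by_contra hn
      have h1 := S.dir _ (mem_frontier_of_not_mem S.isOpen hyc hn)
      have h2 := S.pos x hx
      unfold wfun at hw
      linarith
    have hy := S.mem_symmSet_of_zero hyΩ (hl' x h) (by rw [wfun_planeRefl S.norm, hw, neg_zero])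
    have hy' := hcr.eventually (hopen.mem_nhds hy)
    filter_upwards [hy', hcr.eventually (S.isOpen.mem_nhds hyΩ)] with z hz hzΩ
    have h2 := (Filter.Eventually.self_of_nhds hz).2
    rw [wfun_planeRefl S.norm] at h2
    exact ⟨hzΩ, by linarith⟩
  · obtain ⟨r, hr, hball⟩ := Metric.isOpen_iff.1 S.isOpen x hx
    obtain ⟨z, hz, hzb⟩ := (hfreq.and_eventually (ball_mem_nhds x hr)).exists
    have h1 : ∀ᶠ t in 𝓝[>] (0 : ℝ), z + t • γ ∈ symmSet Ω γ u lamc ∩ ball x r :=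
      (tendsto_line z γ).eventually (inter_mem (hopen.mem_nhds hz) (isOpen_ball.mem_nhds hzb))
    rcases lt_trichotomy ⟪γ, z⟫ lamc with h' | h' | h'
    · have h2 := dist_planeRefl S.norm lamc z x
      rw [planeRefl_of_eq h] at h2
      refine S.mem_symmSet_of_plane h hball (z := planeRefl γ lamc z)
        (by rw [mem_ball, h2]; exact hzb) (by rw [inner_planeRefl S.norm]; linarith) ?_
      rw [wfun_planeRefl S.norm, (Filter.Eventually.self_of_nhds hz).2, neg_zero]
    · obtain ⟨t, ht, ht0⟩ := (h1.and self_mem_nhdsWithin).exists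
      have ht0' : (0 : ℝ) < t := ht0
      exact S.mem_symmSet_of_plane h hball ht.2
        (by rw [inner_add_smul_self S.norm]; linarith) (Filter.Eventually.self_of_nhds ht.1).2
    · exact S.mem_symmSet_of_plane h hball hzb h' (Filter.Eventually.self_of_nhds hz).2
  · have hc : ContinuousAt (wfun u γ lamc) x :=
      (S.w_contDiffAt hx (S.cap lamc le_rfl x hx h)).continuousAt
    refine S.mem_symmSet_of_zero hx h ?_
    exact (isClosed_singleton (x := (0 : ℝ))).mem_of_frequently_of_tendsto
      (hfreq.mono fun z hz => (Filter.Eventually.self_of_nhds hz).2) hc.tendsto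

theorem subset_symmSet (S : Setup Ω γ u f₁ f₂ lamc lam0 L G H) (hconn : IsPreconnected Ω)
    {x : EuclideanSpace ℝ (Fin n)} (hx : x ∈ Ω) (hxl : ⟪γ, x⟫ = lamc) (hG : G x γ = 0) :
    Ω ⊆ symmSet Ω γ u lamc := by
  refine hconn.subset_of_closure_inter_subset isOpen_setOfPred_eventually_nhds ⟨x, hx, ?_⟩
    S.symmSet_closed
  obtain ⟨r, hr, hball⟩ := Metric.isOpen_iff.1 S.isOpen x hx
  by_contra hn
  refine (S.neg_on_plane le_rfl hx hxl ?_).ne hG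
  filter_upwards [ball_mem_nhds x hr] with y hy hyl
  exact (S.crit_nonneg y (hball hy) hyl).lt_of_ne' fun h0 =>
    hn (S.mem_symmSet_of_plane hxl hball hy hyl h0)

theorem symmetric (S : Setup Ω γ u f₁ f₂ lamc lam0 L G H) (hconn : IsPreconnected Ω)
    {x : EuclideanSpace ℝ (Fin n)} (hx : x ∈ Ω) (hxl : ⟪γ, x⟫ = lamc) (hG : G x γ = 0) :
    planeRefl γ lamc '' Ω = Ω ∧ ∀ x ∈ closure Ω, u (planeRefl γ lamc x) = u x := by
  have hsub := S.subset_symmSet hconn hx hxl hG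
  have h1 : ∀ y ∈ Ω, planeRefl γ lamc y ∈ Ω := fun y hy =>
    (Filter.Eventually.self_of_nhds (hsub hy)).1
  have h2 : ∀ y ∈ Ω, u (planeRefl γ lamc y) = u y := fun y hy =>
    sub_eq_zero.1 (Filter.Eventually.self_of_nhds (hsub hy)).2
  refine ⟨Subset.antisymm (image_subset_iff.2 h1) fun y hy =>
    ⟨_, h1 y hy, planeRefl_planeRefl S.norm _ _⟩, ?_⟩
  have h3 : MapsTo (planeRefl γ lamc) (closure Ω) (closure Ω) :=
    MapsTo.closure h1 (continuous_planeRefl γ lamc)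
  exact EqOn.of_subset_closure (f := fun y => u (planeRefl γ lamc y)) h2
    (S.reg.cu.comp (continuous_planeRefl γ lamc).continuousOn h3) S.reg.cu subset_closure le_rfl

theorem cap_neg (S : Setup Ω γ u f₁ f₂ lamc lam0 L G H) {x : EuclideanSpace ℝ (Fin n)}
    (hx : x ∈ Ω) (hxl : lamc < ⟪γ, x⟫) : G x γ < 0 := by
  refine S.neg_on_plane hxl.le hx rfl ?_
  filter_upwards [S.isOpen.mem_nhds hx] with y hy
  exact S.all_caps hxl y hy

end Setup

/-- **Gidas–Ni–Nirenberg moving-planes theorem.** Let `u > 0` solve `-Δu = f(u)` in `Ω`,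
`u = 0` on `∂Ω`, with `f = f₁ + f₂`, `f₁` locally Lipschitz and `f₂` non-decreasing. Let
`λ₀ = sup {γ·x : x ∈ cl Ω}` and let `λ_c` be the critical position of the moving plane,
i.e., the infimum of those `λ < λ₀` such that for all `μ ∈ (λ, λ₀)` the reflected cap
`Σ'(μ)` lies in `Ω`. Then `∇u·γ < 0` and `u(x) < u(x^λ)` on each cap `Σ(λ)`, `λ_c < λ < λ₀`;
in particular `∇u·γ < 0` in `Σ(λ_c)`; and if `∇u·γ = 0` somewhere on `Ω ∩ T_{λ_c}` then `u`
and `Ω` are symmetric in the hyperplane `T_{λ_c}`. -/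
theorem gidas_ni_nirenberg_moving_planes {n : ℕ}
    (Ω : Set (EuclideanSpace ℝ (Fin n)))
    (hΩo : IsOpen Ω) (hΩconn : IsConnected Ω) (hΩb : IsBounded Ω) (hΩbd : IsC2Domain Ω)
    (γ : EuclideanSpace ℝ (Fin n)) (hγ : ‖γ‖ = 1)
    (u : EuclideanSpace ℝ (Fin n) → ℝ) (f f₁ f₂ : ℝ → ℝ)
    (hu : ContDiffOn ℝ 2 u (closure Ω))
    (hupos : ∀ x ∈ Ω, 0 < u x)
    (heq : ∀ x ∈ Ω, lap u x = -(f (u x)))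
    (hdir : ∀ x ∈ frontier Ω, u x = 0)
    (hf : f = f₁ + f₂) (hf₁ : LocallyLipschitz f₁) (hf₂ : Monotone f₂)
    (lam0 lamc : ℝ)
    (hlam0 : lam0 = sSup ((fun x => ⟪γ, x⟫) '' closure Ω))
    (hlamc : lamc = sInf {l : ℝ | l < lam0 ∧
      ∀ μ, l < μ → μ < lam0 → planeRefl γ μ '' planeCap Ω γ μ ⊆ Ω})
    (hlt : lamc < lam0) :
    (∀ l, lamc < l → l < lam0 → ∀ x ∈ planeCap Ω γ l,
        fderiv ℝ u x γ < 0 ∧ u x < u (planeRefl γ l x)) ∧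
    (∀ x ∈ planeCap Ω γ lamc, fderiv ℝ u x γ < 0) ∧
    ((∃ x ∈ Ω, ⟪γ, x⟫ = lamc ∧ fderiv ℝ u x γ = 0) →
      planeRefl γ lamc '' Ω = Ω ∧ ∀ x ∈ closure Ω, u (planeRefl γ lamc x) = u x) := by
  have hK : IsCompact (closure Ω) := hΩb.isCompact_closure
  obtain ⟨G, H, hreg⟩ := exists_reg hΩo hΩbd hu
  obtain ⟨K, hKlip⟩ := LocallyLipschitzOn.exists_lipschitzOnWith_of_compact
    (hK.image_of_continuousOn hreg.cu) (hf₁.locallyLipschitzOn (s := u '' closure Ω))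
  have hle : ∀ x ∈ closure Ω, ⟪γ, x⟫ ≤ lam0 := by
    intro x hx
    rw [hlam0]
    exact le_csSup (hK.image (by fun_prop)).bddAbove ⟨x, hx, rfl⟩
  have S : Setup Ω γ u f₁ f₂ lamc lam0 (K : ℝ) G H :=
    { isOpen := hΩo
      compact := hK
      c2 := hΩbd
      norm := hγ
      reg := hreg
      pos := hupos
      eq := fun x hx => by rw [heq x hx, hf]; rfl
      dir := hdir
      mono := hf₂
      L0 := K.coe_nonneg
      lip := fun x hx y hy => by
        have := hKlip.dist_le_mul _ ⟨x, hx, rfl⟩ _ ⟨y, hy, rfl⟩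
        simpa only [Real.dist_eq] using this
      lt := hlt
      le := hle
      cap := cap_reflect hΩo hΩb hΩbd hγ hle hlamc }
  refine ⟨fun l hl _ x hx => ⟨?_, ?_⟩, fun x hx => ?_, ?_⟩
  · rw [hreg.eqG x hx.1]
    exact S.cap_neg hx.1 (hl.trans hx.2)
  · exact sub_pos.1 (S.all_caps hl x hx.1 hx.2)
  · rw [hreg.eqG x hx.1]
    exact S.cap_neg hx.1 hx.2
  · rintro ⟨x, hx, hxl, hx0⟩
    rw [hreg.eqG x hx] at hx0
    exact S.symmetric hΩconn.isPreconnected hx hxl hx0
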